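/- arXiv:1703.10115 — 2 statements merged into one kernel-verified Lean document; each statement's English description precedes it below -/
import Mathlib

section
/- Let φ(τ,z) be a weakly holomorphic Jacobi form of even weight k and index m. Then the function φ̃(τ) := τ^{-k} Σ_{ℓ=0}^{m-1} φ(-1/(mτ), ℓ/m) is a weakly holomorphic modular form of weight k on Γ₀(m); that is, φ̃ is holomorphic on ℍ, satisfies φ̃((aτ+b)/(cτ+d)) = (cτ+d)^k φ̃(τ) for all [[a,b],[c,d]] ∈ Γ₀(m), and is meromorphic at the cusps of Γ₀(m). -/
open Complex Matrix

noncomputable section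

/-- `SL(2, ℝ)`. -/
abbrev SL2R := Matrix.SpecialLinearGroup (Fin 2) ℝ

/-- `q = e^{2πiz}` (also used as `ζ = e^{2πiz}`). -/
def qc (z : ℂ) : ℂ := Complex.exp (2 * Real.pi * Complex.I * z)

/-- The Dedekind eta function `η(z) = q^{1/24} ∏_{n ≥ 1} (1 - q^n)` (intended for `Im z > 0`). -/
def dedekindEta (z : ℂ) : ℂ :=
  Complex.exp (Real.pi * Complex.I * z / 12) *
    ∏' n : ℕ, (1 - Complex.exp (2 * Real.pi * Complex.I * ((n : ℂ) + 1) * z))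

/-- The hauptmodul `j_N` of `Γ₀(N)` for `N ∈ {2, 3, 5, 7, 13, 6, 10}`. -/
def jn (N : ℕ) (z : ℂ) : ℂ :=
  if N = 6 then (dedekindEta (2 * z) * dedekindEta (3 * z) ^ 3 / (dedekindEta z * dedekindEta (6 * z) ^ 3)) ^ 3 - 3
  else if N = 10 then dedekindEta (2 * z) * dedekindEta (5 * z) ^ 5 / (dedekindEta z * dedekindEta (10 * z) ^ 5) - 1
  else (dedekindEta z / dedekindEta ((N : ℂ) * z)) ^ (24 / (N - 1)) + 24 / ((N : ℂ) - 1)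

/-- The hauptmodul `j_N^*` of the Fricke group `Γ₀^*(N)` for `N ∈ {2, 3, 5, 7, 13, 6, 10}`. -/
def jnStar (N : ℕ) (z : ℂ) : ℂ :=
  if N = 6 then
    (dedekindEta z * dedekindEta (3 * z) / (dedekindEta (2 * z) * dedekindEta (6 * z))) ^ 6 + 6 +
      2 ^ 6 * (dedekindEta (2 * z) * dedekindEta (6 * z) / (dedekindEta z * dedekindEta (3 * z))) ^ 6
  else if N = 10 then
    (dedekindEta z * dedekindEta (5 * z) / (dedekindEta (2 * z) * dedekindEta (10 * z))) ^ 4 + 4 +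
      2 ^ 4 * (dedekindEta (2 * z) * dedekindEta (10 * z) / (dedekindEta z * dedekindEta (5 * z))) ^ 4
  else
    (dedekindEta z / dedekindEta ((N : ℂ) * z)) ^ (24 / (N - 1)) + 24 / ((N : ℂ) - 1) +
      (N : ℂ) ^ (12 / (N - 1)) * (dedekindEta ((N : ℂ) * z) / dedekindEta z) ^ (24 / (N - 1))

/-- `f` has the `q`-expansion `f(τ) = Σ_{n ≥ n₀} (a n) q^n` on the upper half-plane. -/
def HasQExp (f : ℂ → ℂ) (a : ℤ → ℂ) (n₀ : ℤ) : Prop :=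
  (∀ n < n₀, a n = 0) ∧
    ∀ τ : ℂ, 0 < τ.im →
      HasSum (fun m : ℕ => a (n₀ + m) * qc τ ^ (n₀ + (m : ℤ))) (f τ)

/-- `Γ₀(N)` viewed as a subgroup of `SL(2, ℝ)`. -/
def Gamma0SL2R (N : ℕ) : Subgroup SL2R :=
  (CongruenceSubgroup.Gamma0 N).map
    (Matrix.SpecialLinearGroup.map (Int.castRingHom ℝ))

/-- The set of Atkin–Lehner matrices `W_e` of level `N`:
`W_e = e^{-1/2} [[xe, y], [zN, we]]`, `x, y, z, w ∈ ℤ` (determinant `1` being automatic). -/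
def atkinLehnerSet (N e : ℕ) : Set SL2R :=
  { g | ∃ x y z w : ℤ,
      g.1 = (Real.sqrt e)⁻¹ • !![(x : ℝ) * e, (y : ℝ); (z : ℝ) * N, (w : ℝ) * e] }

/-- The Fricke group `Γ₀^*(N)`, generated by `Γ₀(N)` and all Atkin–Lehner involutions `W_e`
for `e ∣ N` with `gcd(e, N/e) = 1`. -/
def FrickeGroup (N : ℕ) : Subgroup SL2R :=
  Subgroup.closure
    ((Gamma0SL2R N : Set SL2R) ∪
      ⋃ e ∈ {e : ℕ | e ∣ N ∧ Nat.Coprime e (N / e)}, atkinLehnerSet N e)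

/-- The Gram matrix of the integral binary quadratic form `[a, b, c]`. -/
def formMat (a b c : ℤ) : Matrix (Fin 2) (Fin 2) ℝ :=
  !![(a : ℝ), (b : ℝ) / 2; (b : ℝ) / 2, (c : ℝ)]

/-- `𝒬_{d,N}`: positive definite integral binary quadratic forms `[a, b, c]` of
discriminant `-d` with `N ∣ a`. -/
def QdN (d : ℤ) (N : ℕ) : Set (Matrix (Fin 2) (Fin 2) ℝ) :=
  { M | ∃ a b c : ℤ, M = formMat a b c ∧ 0 < a ∧ b ^ 2 - 4 * a * c = -d ∧ (N : ℤ) ∣ a }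

/-- `𝒬_{d,N,h}`: members of `𝒬_{d,N}` with `b ≡ h (mod 2N)`. -/
def QdNh (d : ℤ) (N : ℕ) (h : ℤ) : Set (Matrix (Fin 2) (Fin 2) ℝ) :=
  { M | ∃ a b c : ℤ, M = formMat a b c ∧ 0 < a ∧ b ^ 2 - 4 * a * c = -d ∧ (N : ℤ) ∣ a ∧
      (b : ZMod (2 * N)) = (h : ZMod (2 * N)) }

/-- Orbit relation of the (right) action `Q ↦ Q ∘ g`, i.e. `M ↦ gᵀ M g`, of `Γ ≤ SL(2, ℝ)`
on a set `S` of Gram matrices of quadratic forms. -/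
def formRel (Γ : Subgroup SL2R) (S : Set (Matrix (Fin 2) (Fin 2) ℝ)) (Q Q' : S) : Prop :=
  ∃ g ∈ Γ, Q'.1 = (g.1)ᵀ * Q.1 * g.1

/-- The CM point `α_Q` of a positive definite form (as a point of `ℂ`; it lies in the upper
half-plane): `α_Q = (-b + i √d) / (2a) = (-(b/2) + i √(det M)) / a`. -/
def cmPointC (M : Matrix (Fin 2) (Fin 2) ℝ) : ℂ :=
  ((-(M 0 1) : ℝ) + Complex.I * Real.sqrt M.det) / ((M 0 0 : ℝ) : ℂ)

/-- The order of the stabilizer of the form `M` in `Γ/{±1}` (the stabilizer in `Γ` contains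
`±1` and has twice the cardinality). -/
def stabOrder (Γ : Subgroup SL2R) (M : Matrix (Fin 2) (Fin 2) ℝ) : ℕ :=
  Nat.card { g : SL2R // g ∈ Γ ∧ (g.1)ᵀ * M * g.1 = M } / 2

/-- The modular trace `Σ_{Q ∈ S/Γ} f(α_Q) / |Γ̄_Q|`. -/
def classTrace (Γ : Subgroup SL2R) (f : ℂ → ℂ)
    (S : Set (Matrix (Fin 2) (Fin 2) ℝ)) : ℂ :=
  ∑ᶠ O : Quot (formRel Γ S),
    f (cmPointC (Quot.out O).1) / (stabOrder Γ (Quot.out O).1 : ℂ)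

/-- `t₂^{(N*)}(d)`, where `P` is the polynomial with `φ₂(j_N^*) = P(j_N^*)`;
includes the paper's conventions at nonpositive indices. -/
def t2Star (N : ℕ) (P : Polynomial ℂ) (d : ℤ) : ℂ :=
  if 0 < d then
    classTrace (FrickeGroup N) (fun z => Polynomial.eval (jnStar N z) P) (QdN d N)
  else if d = 0 then (if N = 2 then 5 else if N = 6 ∨ N = 10 then 5 / 2 else 3)
  else if d = -1 then -1
  else if d = -4 then -2
  else 0

/-- `σ₁^{(N)}(x) = Σ_{d ∣ x, N ∤ d} d` for `x ∈ ℤ_{>0}`, `(N-1)/24` at `x = 0`, and `0`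
off `ℤ_{≥0}`. -/
def sigmaN (N : ℕ) (x : ℚ) : ℂ :=
  if x = 0 then ((N : ℂ) - 1) / 24
  else if 0 < x ∧ x.den = 1 then
    ∑ d ∈ (Nat.divisors x.num.toNat).filter (fun d => ¬ N ∣ d), (d : ℂ)
  else 0

/-- `σ₁(x) = Σ_{d ∣ x} d` for `x ∈ ℤ_{>0}` and `0` otherwise. -/
def sigmaQ (x : ℚ) : ℂ :=
  if 0 < x ∧ x.den = 1 then ∑ d ∈ Nat.divisors x.num.toNat, (d : ℂ) else 0

/-- A weakly holomorphic Jacobi form of weight `k` and index `m`. -/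
structure WeakJacobiForm (k : ℤ) (m : ℕ) where
  toFun : ℂ → ℂ → ℂ
  holo : DifferentiableOn ℂ (fun p : ℂ × ℂ => toFun p.1 p.2)
      ({τ : ℂ | 0 < τ.im} ×ˢ (Set.univ : Set ℂ))
  slash_inv : ∀ a b c d : ℤ, a * d - b * c = 1 → ∀ τ z : ℂ, 0 < τ.im →
    ((c : ℂ) * τ + d) ^ (-k) *
        Complex.exp (-(2 * Real.pi * Complex.I * m * c * z ^ 2) / ((c : ℂ) * τ + d)) *
        toFun (((a : ℂ) * τ + b) / ((c : ℂ) * τ + d)) (z / ((c : ℂ) * τ + d)) =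
      toFun τ z
  elliptic : ∀ lm mu : ℤ, ∀ τ z : ℂ, 0 < τ.im →
    Complex.exp (2 * Real.pi * Complex.I * m * ((lm : ℂ) ^ 2 * τ + 2 * lm * z)) *
        toFun τ (z + lm * τ + mu) = toFun τ z
  coeff : ℤ → ℤ → ℂ
  coeff_neg_finite : {n : ℤ | n < 0 ∧ ∃ r : ℤ, coeff n r ≠ 0}.Finite
  expansion : ∀ τ z : ℂ, 0 < τ.im →
    HasSum (fun p : ℤ × ℤ => coeff p.1 p.2 * qc τ ^ p.1 * qc z ^ p.2) (toFun τ z)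

/-- Meromorphy of weight `k` at all cusps: at each cusp `γ∞`, the function `F|_k γ` has a
Fourier expansion in fractional powers of `q` with only finitely many negative terms. -/
def MeromAtCusps (k : ℤ) (F : ℂ → ℂ) : Prop :=
  ∀ a b c d : ℤ, a * d - b * c = 1 →
    ∃ (M : ℕ) (cs : ℤ → ℂ) (n₀ : ℤ), 0 < M ∧
      ∀ τ : ℂ, 0 < τ.im →
        HasSum
          (fun j : ℕ => cs (n₀ + j) *
            Complex.exp (2 * Real.pi * Complex.I * τ / M) ^ (n₀ + (j : ℤ)))
          (((c : ℂ) * τ + d) ^ (-k) * F (((a : ℂ) * τ + b) / ((c : ℂ) * τ + d)))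

/-- The Möbius action of an element of `SL(2, ℝ)` on `ℂ`. -/
def moebius (g : SL2R) (z : ℂ) : ℂ :=
  ((g.1 0 0 : ℝ) * z + ((g.1 0 1 : ℝ) : ℂ)) / ((g.1 1 0 : ℝ) * z + ((g.1 1 1 : ℝ) : ℂ))

/-- A weakly holomorphic modular function on `Γ`: holomorphic on the upper half-plane,
`Γ`-invariant, with poles only at the cusps. -/
def IsWeaklyHolModularFn (Γ : Subgroup SL2R) (f : ℂ → ℂ) : Prop :=
  DifferentiableOn ℂ f {z : ℂ | 0 < z.im} ∧
    (∀ g ∈ Γ, ∀ z : ℂ, 0 < z.im → f (moebius g z) = f z) ∧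
    MeromAtCusps 0 f

/-- The set `L_{h, d/4N}` of vectors
`X = [[b + h/2N, c/N], [-a, -(b + h/2N)]]`, `a, b, c ∈ ℤ`, of norm `q(X) = d/4N`. -/
def LhSet (N : ℕ) (h d : ℤ) : Set (Matrix (Fin 2) (Fin 2) ℝ) :=
  { X | ∃ a b c : ℤ,
      X = !![(b : ℝ) + (h : ℝ) / (2 * N), (c : ℝ) / N;
             -(a : ℝ), -((b : ℝ) + (h : ℝ) / (2 * N))] ∧
      (2 * b * N + h) ^ 2 - 4 * a * c * N = -d }

/-- The map `X ↦ N ⬝ [[0,-1],[1,0]] ⬝ X` from vectors to Gram matrices of quadratic forms. -/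
def vecToForm (N : ℕ) (X : Matrix (Fin 2) (Fin 2) ℝ) : Matrix (Fin 2) (Fin 2) ℝ :=
  (N : ℝ) • (!![(0 : ℝ), -1; 1, 0] * X)

/-- Orbit relation of `Γ` acting by conjugation `g.X = g X g⁻¹` on a set `S` of vectors. -/
def vecRel (Γ : Subgroup SL2R) (S : Set (Matrix (Fin 2) (Fin 2) ℝ)) (X X' : S) : Prop :=
  ∃ g ∈ Γ, X'.1 = g.1 * X.1 * (g⁻¹).1

/-- The Heegner point `D_X ∈ ℍ` of a vector `X` of positive norm. -/
def heegnerC (X : Matrix (Fin 2) (Fin 2) ℝ) : ℂ :=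
  ((X 0 0 / X 1 0 : ℝ) : ℂ) + Complex.I * Real.sqrt (X.det / (X 1 0) ^ 2)

/-- The order of the stabilizer of the vector `X` in `Γ/{±1}`. -/
def vecStabOrder (Γ : Subgroup SL2R) (X : Matrix (Fin 2) (Fin 2) ℝ) : ℕ :=
  Nat.card { g : SL2R // g ∈ Γ ∧ g.1 * X * (g⁻¹).1 = X } / 2

/-- The modular trace `t_f(h, m) = Σ_{X ∈ Γ\L_{h,m}} f(D_X) / |Γ̄_X|`. -/
def vecTrace (Γ : Subgroup SL2R) (f : ℂ → ℂ) (S : Set (Matrix (Fin 2) (Fin 2) ℝ)) : ℂ :=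
  ∑ᶠ O : Quot (vecRel Γ S), f (heegnerC (Quot.out O).1) / (vecStabOrder Γ (Quot.out O).1 : ℂ)

/-- The weight-2 Eisenstein series `E₂(z) = 1 - 24 Σ_{n ≥ 1} σ₁(n) qⁿ`. -/
def E2 (z : ℂ) : ℂ :=
  1 - 24 * ∑' n : ℕ, (∑ d ∈ Nat.divisors (n + 1), (d : ℂ)) * qc z ^ (n + 1)

/-- `E₂^{(N)}(z) = N E₂(Nz) - E₂(z)`. -/
def E2N (N : ℕ) (z : ℂ) : ℂ := (N : ℂ) * E2 ((N : ℂ) * z) - E2 z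

end

/-!
For rational `x`, `y` the torsion value `φ_{x,y}(τ) = e^{2πim(x²τ + xy)} φ(τ, xτ + y)` satisfies
`φ_{x,y}(γτ) = (cτ + d)^k φ_{(x,y)γ}(τ)` for `γ ∈ SL₂(ℤ)`, and translating `(x, y)` by a lattice
vector multiplies it by a root of unity. Whenever `mw = γτ` with `γ = [[p,q],[r,s]] ∈ SL₂(ℤ)`,
one gets `φ̃(w) = (m(rτ + s))^k Σ_ℓ φ_{ℓp/m, ℓq/m}(τ)`. For `[[a,b],[c,d]] ∈ Γ₀(m)` one has
`m · (aτ+b)/(cτ+d) = γ(mτ)` with `γ = [[a,mb],[c/m,d]]`, so the action only permutes the points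
`ℓ/m` through multiplication by the unit `a` modulo `m`. At the cusps, write
`[[ma,mb],[c,d]] = γ · [[A,B],[0,D]]`; it remains to see that `φ_{x,y}` has a finite principal part
in fractional powers of `q`. The exponents that occur are `n + rx + mx²` with `c(n,r) ≠ 0`. For
integral `x` these are again exponents of the expansion of `φ`, because
`c(n + rx + mx², r + 2mx) = c(n,r)`, so they are bounded below; interpolating between consecutive
integers bounds them below for all real `x`.
-/

open UnitAddTorus MeasureTheory in
lemma eq_zero_of_hasSum_mFourier {d : Type*} [Fintype d] {c : (d → ℤ) → ℂ}
    (hc : ∀ x : UnitAddTorus d, HasSum (fun n => c n * mFourier n x) 0) (n : d → ℤ) :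
    c n = 0 := by
  have hnorm (n : d → ℤ) (x : UnitAddTorus d) : ‖mFourier n x‖ = 1 := by
    simp only [mFourier, fourier_apply, ContinuousMap.coe_mk, norm_prod, Circle.norm_coe,
      Finset.prod_const_one]
  have hsummable : Summable fun n => c n • mFourier n := by
    refine Summable.of_norm ?_
    simpa only [norm_smul, mFourier_norm, norm_mul, hnorm] using (hc 0).summable.norm
  have hsum : HasSum (fun n => c n • mFourier n) 0 := by
    convert hsummable.hasSum
    ext x
    exact (hc x).unique (ContinuousMap.hasSum_apply hsummable.hasSum x)
  -- Mathlib's normalisation of the measure on `ℝ / ℤ` in `mFourierLp` is only a local instance.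
  let _ : MeasureSpace UnitAddCircle := ⟨AddCircle.haarAddCircle⟩
  have : IsProbabilityMeasure (volume : Measure UnitAddCircle) :=
    inferInstanceAs (IsProbabilityMeasure AddCircle.haarAddCircle)
  have hsumLp : HasSum (fun n => c n • mFourierLp 2 n) 0 := by
    have h := (ContinuousMap.toLp (E := ℂ) 2 volume ℂ).hasSum hsum
    rw [map_zero] at h
    exact h.congr_fun fun n => (map_smul _ _ _).symm
  have hinner := (innerSL ℂ (mFourierLp 2 n)).hasSum hsumLp
  have horth := orthonormal_iff_ite.mp (orthonormal_mFourier (d := d)) n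
  simp only [map_smul, map_zero, innerSL_apply_apply, horth, smul_eq_mul, mul_ite, mul_one,
    mul_zero] at hinner
  simpa using hinner.tsum_eq

section Periodic

lemma sum_range_eq_sum_zmod {M : Type*} [AddCommMonoid M] {n : ℕ} [NeZero n] (g : ℕ → M) :
    ∑ l ∈ Finset.range n, g l = ∑ x : ZMod n, g x.val := by
  cases n with
  | zero => exact absurd rfl (NeZero.ne 0)
  | succ n => exact Finset.sum_range _

lemma periodic_apply_val_intCast {α : Type*} {n : ℕ} [NeZero n] {g : ℤ → α}
    (hg : Function.Periodic g n) (l : ℤ) : g (l : ZMod n).val = g l := by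
  rw [ZMod.val_intCast, Int.emod_def, mul_comm]
  exact hg.sub_int_mul_eq _

lemma sum_range_mul_of_periodic {M : Type*} [AddCommMonoid M] {n : ℕ} [NeZero n] {g : ℤ → M}
    (hg : Function.Periodic g n) {a : ℤ} (ha : IsCoprime a n) :
    ∑ l ∈ Finset.range n, g (a * l) = ∑ l ∈ Finset.range n, g l := by
  rw [sum_range_eq_sum_zmod fun l => g (a * l), sum_range_eq_sum_zmod fun l => g l]
  refine Fintype.sum_equiv (Units.mulLeft (ZMod.unitOfIsCoprime a ha)) _ _ fun x => ?_
  rw [← periodic_apply_val_intCast hg]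
  simp

end Periodic

section Moebius

lemma intCast_mul_add_ne_zero_of_isCoprime {c d : ℤ} (h : IsCoprime c d) {τ : ℂ}
    (hτ : 0 < τ.im) : (c : ℂ) * τ + d ≠ 0 := by
  have hcd : ![(c : ℝ), d] ≠ 0 := fun h0 => by
    have hc := congrFun h0 0
    have hd := congrFun h0 1
    simp only [cons_val_zero, cons_val_one, Pi.zero_apply, Int.cast_eq_zero] at hc hd
    exact not_isCoprime_zero_zero (hc ▸ hd ▸ h)
  exact_mod_cast UpperHalfPlane.linear_ne_zero_of_im hτ.ne' hcd

lemma im_moebius_pos {a b c d : ℝ} (h : 0 < a * d - b * c) {τ : ℂ} (hτ : 0 < τ.im) :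
    0 < ((a * τ + b) / (c * τ + d)).im := by
  have hcd : ![c, d] ≠ 0 := fun h0 => by
    have hc : c = 0 := congrFun h0 0
    have hd : d = 0 := congrFun h0 1
    simp [hc, hd] at h
  have hden : (c : ℂ) * τ + d ≠ 0 := UpperHalfPlane.linear_ne_zero_of_im hτ.ne' hcd
  have him : ((a * τ + b) / (c * τ + d)).im =
      (a * d - b * c) * τ.im / Complex.normSq (c * τ + d) := by
    rw [Complex.div_im, ← sub_div]
    congr 1
    simp only [add_im, mul_im, ofReal_re, ofReal_im, zero_mul, add_zero, add_re, mul_re, sub_zero]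
    ring
  rw [him]
  exact div_pos (mul_pos h hτ) (Complex.normSq_pos.mpr hden)

lemma im_affine_pos {A D : ℕ} (hA : 0 < A) (hD : 0 < D) (B : ℤ) {τ : ℂ} (hτ : 0 < τ.im) :
    0 < ((A * τ + B) / D).im := by
  simpa using im_moebius_pos (a := A) (b := B) (c := 0) (d := D)
    (by rw [mul_zero, sub_zero]; positivity) hτ

open FixedDetMatrices in
lemma exists_smul_mem_reps {m : ℤ} (hm : m ≠ 0) (A : FixedDetMatrix (Fin 2) ℤ m) :
    ∃ γ : SpecialLinearGroup (Fin 2) ℤ, γ • A ∈ reps m := by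
  induction A using induction_on hm with
  | h0 A h10 h00 h01 h11 => exact ⟨1, by rw [one_smul]; exact ⟨h10, h00, h01, h11⟩⟩
  | hS B hB | hT B hB =>
    obtain ⟨γ, hγ⟩ := hB
    exact ⟨γ * _⁻¹, by rwa [mul_smul, inv_smul_smul]⟩

lemma exists_eq_specialLinearGroup_mul_upperTriangular (g : Matrix (Fin 2) (Fin 2) ℤ)
    (hg : 0 < g.det) :
    ∃ (γ : SpecialLinearGroup (Fin 2) ℤ) (A D : ℕ) (B : ℤ), 0 < A ∧ 0 < D ∧
      g = γ * !![(A : ℤ), B; 0, D] := by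
  let A : FixedDetMatrix (Fin 2) ℤ g.det := ⟨g, rfl⟩
  obtain ⟨γ, hγ⟩ := exists_smul_mem_reps hg.ne' A
  set T := (γ : Matrix (Fin 2) (Fin 2) ℤ) * g with hT
  have h10 : T 1 0 = 0 := hγ.1
  have h00 : 0 < T 0 0 := hγ.2.1
  have hdet : T 0 0 * T 1 1 = g.det := by
    have h : T.det = g.det := by rw [hT, det_mul, γ.det_coe, one_mul]
    rwa [det_fin_two, h10, mul_zero, sub_zero] at h
  have h11 : 0 < T 1 1 := pos_of_mul_pos_right (hdet ▸ hg) h00.le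
  refine ⟨γ⁻¹, (T 0 0).toNat, (T 1 1).toNat, T 0 1, by omega, by omega, ?_⟩
  rw [Int.toNat_of_nonneg h00.le, Int.toNat_of_nonneg h11.le, ← h10, ← eta_fin_two T]
  exact (congrArg Subtype.val (inv_smul_smul γ A)).symm

end Moebius

section QParameter

lemma qc_ne_zero (z : ℂ) : qc z ≠ 0 := Complex.exp_ne_zero _

lemma qc_add (z w : ℂ) : qc (z + w) = qc z * qc w := by
  simp only [qc, mul_add, Complex.exp_add]

lemma qc_intCast_mul (n : ℤ) (z : ℂ) : qc (n * z) = qc z ^ n := by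
  rw [qc, qc, ← Complex.exp_int_mul]
  congr 1
  ring

lemma qc_intCast (n : ℤ) : qc n = 1 := by
  rw [qc, mul_comm]
  exact Complex.exp_int_mul_two_pi_mul_I n

lemma mFourier_coe_eq_qc (n : Fin 2 → ℤ) (x y : ℝ) :
    UnitAddTorus.mFourier n ![(x : UnitAddCircle), (y : UnitAddCircle)] =
      qc x ^ n 0 * qc y ^ n 1 := by
  rw [← qc_intCast_mul, ← qc_intCast_mul]
  simp only [UnitAddTorus.mFourier, ContinuousMap.coe_mk, Fin.prod_univ_two, cons_val_zero,
    cons_val_one, fourier_coe_apply, qc]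
  congr 2 <;> push_cast <;> ring

lemma eq_of_hasSum_qc {c c' : ℤ × ℤ → ℂ} {f : ℂ → ℂ → ℂ}
    (hc : ∀ τ z : ℂ, 0 < τ.im → HasSum (fun p => c p * qc τ ^ p.1 * qc z ^ p.2) (f τ z))
    (hc' : ∀ τ z : ℂ, 0 < τ.im → HasSum (fun p => c' p * qc τ ^ p.1 * qc z ^ p.2) (f τ z)) :
    c = c' := by
  -- On the slice `τ = x + i`, `z = y` with `x`, `y` real, both sides are Fourier series.
  have hzero (n : Fin 2 → ℤ) : (c (n 0, n 1) - c' (n 0, n 1)) * qc I ^ n 0 = 0 := by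
    refine eq_zero_of_hasSum_mFourier
      (c := fun n => (c (n 0, n 1) - c' (n 0, n 1)) * qc I ^ n 0) (fun t => ?_) n
    obtain ⟨x, hx⟩ := QuotientAddGroup.mk_surjective (t 0)
    obtain ⟨y, hy⟩ := QuotientAddGroup.mk_surjective (t 1)
    have ht : t = ![(x : UnitAddCircle), (y : UnitAddCircle)] := by
      ext i
      fin_cases i
      exacts [hx.symm, hy.symm]
    have h := (hc (x + I) y (by simp)).sub (hc' (x + I) y (by simp))
    rw [sub_self] at h
    refine ((finTwoArrowEquiv ℤ).hasSum_iff.mpr h).congr_fun fun n => ?_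
    have he : finTwoArrowEquiv ℤ n = (n 0, n 1) := rfl
    simp only [ht, mFourier_coe_eq_qc, Function.comp_apply, he, qc_add, mul_zpow]
    ring
  funext p
  have h := hzero ![p.1, p.2]
  exact sub_eq_zero.mp ((mul_eq_zero.mp h).resolve_right (zpow_ne_zero _ (qc_ne_zero I)))

end QParameter

/-- `f` is meromorphic at `i∞` with width `M`: on the upper half-plane it has an expansion in
powers of `q^{1/M}` with finite principal part. The sum runs over all of `ℤ`, with coefficients of
support bounded below, so that expansions with different orders can be added termwise. -/
def HasFractionalQExp (M : ℕ) (f : ℂ → ℂ) : Prop :=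
  ∃ c : ℤ → ℂ, BddBelow c.support ∧
    ∀ τ : ℂ, 0 < τ.im → HasSum (fun n : ℤ => c n * qc (τ / M) ^ n) (f τ)

namespace HasFractionalQExp

variable {M : ℕ} {f g : ℂ → ℂ}

lemma of_hasSum {ι : Type*} {c : ι → ℂ} {e : ι → ℤ} (he : BddBelow (e '' c.support))
    (h : ∀ τ : ℂ, 0 < τ.im → HasSum (fun i => c i * qc (τ / M) ^ e i) (f τ)) :
    HasFractionalQExp M f := by
  refine ⟨fun n => ∑' i : e ⁻¹' {n}, c i, he.mono fun n hn => ?_, fun τ hτ => ?_⟩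
  · by_contra hne
    refine hn ((tsum_congr fun i : e ⁻¹' {n} => ?_).trans tsum_zero)
    by_contra hi
    exact hne ⟨i, hi, i.2⟩
  · have hsigma := (Equiv.sigmaFiberEquiv e).hasSum_iff.mpr (h τ hτ)
    refine (hsigma.sigma fun n => (hsigma.summable.sigma_factor n).hasSum).congr_fun fun n => ?_
    rw [← tsum_mul_right]
    refine tsum_congr fun i => ?_
    have hi : e i = n := i.2
    change _ = c i * qc (τ / M) ^ e i
    rw [hi]

lemma congr (hf : HasFractionalQExp M f) (hfg : ∀ τ : ℂ, 0 < τ.im → g τ = f τ) :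
    HasFractionalQExp M g := by
  obtain ⟨c, hc, hsum⟩ := hf
  exact ⟨c, hc, fun τ hτ => hfg τ hτ ▸ hsum τ hτ⟩

lemma const_mul (hf : HasFractionalQExp M f) (a : ℂ) :
    HasFractionalQExp M fun τ => a * f τ := by
  obtain ⟨c, hc, hsum⟩ := hf
  refine ⟨fun n => a * c n, hc.mono (Function.support_mul_subset_right _ _), fun τ hτ => ?_⟩
  simpa only [mul_assoc] using (hsum τ hτ).mul_left a

lemma sum {ι : Type*} {s : Finset ι} {f : ι → ℂ → ℂ} (hf : ∀ i ∈ s, HasFractionalQExp M (f i)) :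
    HasFractionalQExp M fun τ => ∑ i ∈ s, f i τ := by
  choose! c hc hsum using hf
  refine ⟨fun n => ∑ i ∈ s, c i n, ?_, fun τ hτ => ?_⟩
  · exact (s.finite_toSet.bddBelow_biUnion.mpr hc).mono (Finset.support_sum s c)
  · simpa only [Finset.sum_mul] using hasSum_sum fun i hi => hsum i hi τ hτ

lemma comp_affine (hf : HasFractionalQExp M f) {A D : ℕ} (hA : 0 < A) (hD : 0 < D) (B : ℤ) :
    HasFractionalQExp (M * D) fun τ => f ((A * τ + B) / D) := by
  obtain ⟨c, hc, hsum⟩ := hf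
  refine of_hasSum (c := fun n => c n * qc (n * (B / (M * D)))) (e := fun n => A * n) ?_
    fun τ hτ => ?_
  · have hmono : Monotone fun n : ℤ => A * n :=
      fun _ _ h => mul_le_mul_of_nonneg_left h (Int.natCast_nonneg A)
    exact (hmono.map_bddBelow hc).mono
      (Set.image_mono (Function.support_mul_subset_left _ _))
  · refine (hsum _ (im_affine_pos hA hD B hτ)).congr_fun fun n => ?_
    rw [mul_assoc, ← qc_intCast_mul, ← qc_intCast_mul, ← qc_add]
    congr 2
    push_cast
    ring

lemma exists_hasSum_nat (hf : HasFractionalQExp M f) :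
    ∃ (c : ℤ → ℂ) (n₀ : ℤ), ∀ τ : ℂ, 0 < τ.im →
      HasSum (fun j : ℕ => c (n₀ + j) * qc (τ / M) ^ (n₀ + (j : ℤ))) (f τ) := by
  obtain ⟨c, ⟨n₀, hn₀⟩, hsum⟩ := hf
  refine ⟨c, n₀, fun τ hτ => ?_⟩
  have hinj : Function.Injective fun j : ℕ => n₀ + (j : ℤ) := fun i j hij => by simpa using hij
  refine (hinj.hasSum_iff fun n hn => ?_).mpr (hsum τ hτ)
  have hcn : c n = 0 := by
    by_contra hne
    exact hn ⟨(n - n₀).toNat, by have := hn₀ hne; dsimp only; omega⟩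
  rw [hcn, zero_mul]

end HasFractionalQExp

lemma meromAtCusps_of_hasFractionalQExp {k : ℤ} {F : ℂ → ℂ}
    (h : ∀ a b c d : ℤ, a * d - b * c = 1 → ∃ M : ℕ, 0 < M ∧
      HasFractionalQExp M fun τ => (c * τ + d) ^ (-k) * F ((a * τ + b) / (c * τ + d))) :
    MeromAtCusps k F := by
  intro a b c d hdet
  obtain ⟨M, hM, hexp⟩ := h a b c d hdet
  obtain ⟨cs, n₀, hsum⟩ := hexp.exists_hasSum_nat
  exact ⟨M, cs, n₀, hM, by simpa only [qc, mul_div_assoc] using hsum⟩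

namespace WeakJacobiForm

variable {k : ℤ} {m : ℕ} (φ : WeakJacobiForm k m)

lemma toFun_moebius {a b c d : ℤ} (hdet : a * d - b * c = 1) {τ : ℂ} (hτ : 0 < τ.im) (z : ℂ) :
    φ.toFun ((a * τ + b) / (c * τ + d)) (z / (c * τ + d)) =
      (c * τ + d) ^ k * qc (m * c * z ^ 2 / (c * τ + d)) * φ.toFun τ z := by
  have hden : (c : ℂ) * τ + d ≠ 0 :=
    intCast_mul_add_ne_zero_of_isCoprime ⟨-b, a, by linear_combination hdet⟩ hτ
  have hqc : Complex.exp (-(2 * Real.pi * I * m * c * z ^ 2) / (c * τ + d)) =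
      (qc (m * c * z ^ 2 / (c * τ + d)))⁻¹ := by
    rw [qc, ← Complex.exp_neg]
    congr 1
    ring
  rw [← φ.slash_inv a b c d hdet τ z hτ, hqc, _root_.zpow_neg, ← mul_assoc, mul_mul_mul_comm,
    mul_inv_cancel₀ (zpow_ne_zero k hden), mul_inv_cancel₀ (qc_ne_zero _), one_mul, one_mul]

lemma toFun_add_int_mul_add_int (l n : ℤ) {τ : ℂ} (hτ : 0 < τ.im) (z : ℂ) :
    φ.toFun τ z = qc (m * (l ^ 2 * τ + 2 * l * z)) * φ.toFun τ (z + l * τ + n) := by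
  rw [← φ.elliptic l n τ z hτ, qc]
  simp only [mul_assoc]

section Coefficients

lemma coeff_elliptic (l n r : ℤ) :
    φ.coeff (n + l * r + m * l ^ 2) (r + 2 * m * l) = φ.coeff n r := by
  let e : ℤ × ℤ ≃ ℤ × ℤ :=
    { toFun := fun p => (p.1 + l * p.2 + m * l ^ 2, p.2 + 2 * m * l)
      invFun := fun p => (p.1 - l * p.2 + m * l ^ 2, p.2 - 2 * m * l)
      left_inv := fun p => Prod.ext (by dsimp only; ring) (by dsimp only; ring)
      right_inv := fun p => Prod.ext (by dsimp only; ring) (by dsimp only; ring) }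
  have hshift : (fun p => φ.coeff p.1 p.2) = fun p => φ.coeff (e.symm p).1 (e.symm p).2 := by
    refine eq_of_hasSum_qc φ.expansion fun τ z hτ => e.hasSum_iff.mp ?_
    rw [φ.toFun_add_int_mul_add_int l 0 hτ z]
    refine ((φ.expansion τ (z + l * τ + (0 : ℤ)) hτ).mul_left _).congr_fun fun p => ?_
    rw [Function.comp_apply, Equiv.symm_apply_apply]
    have hqc : qc τ ^ (p.1 + l * p.2 + m * l ^ 2) * qc z ^ (p.2 + 2 * m * l) =
        qc (m * (l ^ 2 * τ + 2 * l * z)) *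
          (qc τ ^ p.1 * qc (z + l * τ + (0 : ℤ)) ^ p.2) := by
      simp only [← qc_intCast_mul, ← qc_add]
      congr 1
      push_cast
      ring
    linear_combination φ.coeff p.1 p.2 * hqc
  have h := congrFun hshift (e (n, r))
  simp only [Equiv.symm_apply_apply] at h
  exact h

/-- For `m > 0` this says that `4mn - r²` is bounded below on the support of the coefficients. -/
lemma exists_le_of_coeff_ne_zero :
    ∃ K : ℝ, ∀ n r : ℤ, φ.coeff n r ≠ 0 → ∀ x : ℝ, K ≤ n + r * x + m * x ^ 2 := by
  obtain ⟨K₀, hK₀⟩ := φ.coeff_neg_finite.bddBelow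
  have hint (n r : ℤ) (h : φ.coeff n r ≠ 0) (l : ℤ) :
      ((min K₀ 0 : ℤ) : ℝ) ≤ n + l * r + m * l ^ 2 := by
    rw [← φ.coeff_elliptic l n r] at h
    have : min K₀ 0 ≤ n + l * r + m * l ^ 2 := by
      rcases lt_or_ge (n + l * r + m * l ^ 2) 0 with hneg | hnonneg
      · exact (min_le_left _ _).trans (hK₀ ⟨hneg, _, h⟩)
      · exact (min_le_right _ _).trans hnonneg
    exact_mod_cast this
  refine ⟨(min K₀ 0 : ℤ) - m, fun n r h x => ?_⟩
  -- Interpolate between the integers `⌊x⌋` and `⌊x⌋ + 1`.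
  have ht₀ := Int.fract_nonneg x
  have ht₁ := (Int.fract_lt_one x).le
  have hx := Int.floor_add_fract x
  have hfloor := hint n r h ⌊x⌋
  have hceil := hint n r h (⌊x⌋ + 1)
  simp only [Int.cast_add, Int.cast_one] at hceil
  generalize (⌊x⌋ : ℝ) = l at *
  generalize Int.fract x = t at *
  generalize ((min K₀ 0 : ℤ) : ℝ) = K at *
  subst hx
  have hdefect : (m : ℝ) * (t * (1 - t)) ≤ m := mul_le_of_le_one_right m.cast_nonneg (by nlinarith)
  calc K - m ≤ (1 - t) * K + t * K - m * (t * (1 - t)) := by linarith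
    _ ≤ (1 - t) * (n + l * r + m * l ^ 2) + t * (n + (l + 1) * r + m * (l + 1) ^ 2) -
        m * (t * (1 - t)) := by
      have := sub_nonneg.mpr ht₁
      gcongr
    _ = n + r * (l + t) + m * (l + t) ^ 2 := by ring

end Coefficients

section TorsionValue

/-- The normalized restriction `τ ↦ e^{2πim(x²τ + xy)} φ(τ, xτ + y)` of `φ` to a section of the
universal elliptic curve; the prefactor makes it transform under `SL(2, ℤ)` through
`(x, y) ↦ (x, y)γ`. -/
noncomputable def torsionValue (x y τ : ℂ) : ℂ :=
  qc (m * (x ^ 2 * τ + x * y)) * φ.toFun τ (x * τ + y)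

lemma torsionValue_moebius {a b c d : ℤ} (hdet : a * d - b * c = 1) {τ : ℂ} (hτ : 0 < τ.im)
    (x y : ℂ) :
    φ.torsionValue x y ((a * τ + b) / (c * τ + d)) =
      (c * τ + d) ^ k * φ.torsionValue (x * a + y * c) (x * b + y * d) τ := by
  have hden : (c : ℂ) * τ + d ≠ 0 :=
    intCast_mul_add_ne_zero_of_isCoprime ⟨-b, a, by linear_combination hdet⟩ hτ
  have hdetC : (a : ℂ) * d - b * c = 1 := by exact_mod_cast hdet
  set z := (x * a + y * c) * τ + (x * b + y * d) with hz
  have harg : x * ((a * τ + b) / (c * τ + d)) + y = z / (c * τ + d) := by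
    rw [eq_div_iff hden, add_mul, mul_assoc, div_mul_cancel₀ _ hden, hz]
    ring
  have hexp : m * (x ^ 2 * ((a * τ + b) / (c * τ + d)) + x * y) + m * c * z ^ 2 / (c * τ + d) =
      m * ((x * a + y * c) ^ 2 * τ + (x * a + y * c) * (x * b + y * d)) := by
    have hX : x + c * z = (x * a + y * c) * (c * τ + d) := by
      rw [hz]
      linear_combination -x * hdetC
    calc _ = m * ((x + c * z) * (z / (c * τ + d))) := by linear_combination m * x * harg
      _ = m * ((x * a + y * c) * z) := by rw [hX, mul_assoc, mul_div_cancel₀ _ hden]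
      _ = _ := by rw [hz]; ring
  rw [torsionValue, harg, φ.toFun_moebius hdet hτ, torsionValue, ← hexp, qc_add]
  ring

lemma torsionValue_add_int (x y : ℂ) (l n : ℤ) {τ : ℂ} (hτ : 0 < τ.im) :
    φ.torsionValue (x + l) (y + n) τ = qc (m * (x * n - l * y)) * φ.torsionValue x y τ := by
  have hz : (x + l) * τ + (y + n) = x * τ + y + l * τ + n := by ring
  have hqc : qc (m * ((x + l) ^ 2 * τ + (x + l) * (y + n))) =
      qc (m * (x * n - l * y)) * qc (m * (x ^ 2 * τ + x * y)) *
        qc (m * (l ^ 2 * τ + 2 * l * (x * τ + y))) := by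
    rw [← mul_one (qc (m * (x * n - l * y))), ← qc_intCast (m * l * n), ← qc_add, ← qc_add,
      ← qc_add]
    congr 1
    push_cast
    ring
  rw [torsionValue, torsionValue, φ.toFun_add_int_mul_add_int l n hτ (x * τ + y), hz, hqc]
  ring

lemma hasFractionalQExp_torsionValue {N : ℕ} (hN : 0 < N) (x y : ℤ) :
    HasFractionalQExp (N ^ 2) (φ.torsionValue (x / N) (y / N)) := by
  have hN₀ : (N : ℂ) ≠ 0 := by exact_mod_cast hN.ne'
  obtain ⟨K, hK⟩ := φ.exists_le_of_coeff_ne_zero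
  refine .of_hasSum (e := fun p : ℤ × ℤ => p.1 * N ^ 2 + p.2 * x * N + m * x ^ 2)
    (c := fun p => φ.coeff p.1 p.2 * qc (m * (x / N) * (y / N) + p.2 * (y / N))) ?_ fun τ hτ => ?_
  · refine ⟨⌈N ^ 2 * K⌉, ?_⟩
    rintro _ ⟨⟨n, r⟩, hp, rfl⟩
    have hNℝ : (N : ℝ) ≠ 0 := by exact_mod_cast hN.ne'
    refine Int.ceil_le.mpr ?_
    calc (N : ℝ) ^ 2 * K ≤ N ^ 2 * (n + r * (x / N) + m * (x / N) ^ 2) := by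
          gcongr
          exact hK n r (left_ne_zero_of_mul hp) _
      _ = ((n * N ^ 2 + r * x * N + m * x ^ 2 : ℤ) : ℝ) := by
          push_cast
          field_simp
  · refine ((φ.expansion τ (x / N * τ + y / N) hτ).mul_left _).congr_fun fun p => ?_
    have hqc : qc (m * (x / N) * (y / N) + p.2 * (y / N)) *
          qc (τ / (N ^ 2 : ℕ)) ^ (p.1 * N ^ 2 + p.2 * x * N + m * x ^ 2) =
        qc (m * ((x / N) ^ 2 * τ + x / N * (y / N))) *
          (qc τ ^ p.1 * qc (x / N * τ + y / N) ^ p.2) := by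
      simp only [← qc_intCast_mul, ← qc_add]
      congr 1
      push_cast
      field_simp
      ring
    linear_combination φ.coeff p.1 p.2 * hqc

end TorsionValue

section TorsionSum

/-- The function `φ̃(τ) = τ^{-k} Σ_{ℓ=0}^{m-1} φ(-1/(mτ), ℓ/m)`: the sum of `φ` over the cyclic
subgroup of `m`-torsion points generated by `1/m`, composed with the Fricke involution of level
`m`. -/
noncomputable def torsionSum (τ : ℂ) : ℂ :=
  τ ^ (-k) * ∑ ℓ ∈ Finset.range m, φ.toFun (-1 / (m * τ)) (ℓ / m)

lemma torsionSum_eq_sum_torsionValue {p q r s : ℤ} (hdet : p * s - q * r = 1) {τ w : ℂ}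
    (hτ : 0 < τ.im) (hw : m * w = (p * τ + q) / (r * τ + s)) :
    φ.torsionSum w = (m * (r * τ + s)) ^ k *
      ∑ ℓ ∈ Finset.range m, φ.torsionValue (ℓ * p / m) (ℓ * q / m) τ := by
  have hpq : (p : ℂ) * τ + q ≠ 0 :=
    intCast_mul_add_ne_zero_of_isCoprime ⟨s, -r, by linear_combination hdet⟩ hτ
  have hrs : (r : ℂ) * τ + s ≠ 0 :=
    intCast_mul_add_ne_zero_of_isCoprime ⟨-q, p, by linear_combination hdet⟩ hτ
  have harg : -1 / (m * w) = ((-r : ℤ) * τ + (-s : ℤ)) / (p * τ + q) := by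
    rw [hw]
    push_cast
    field_simp
    ring
  have hterm (ℓ : ℕ) : φ.toFun (-1 / (m * w)) (ℓ / m) =
      (p * τ + q) ^ k * φ.torsionValue (ℓ * p / m) (ℓ * q / m) τ := by
    have h := φ.torsionValue_moebius (a := -r) (b := -s) (c := p) (d := q)
      (by linear_combination hdet) hτ 0 (ℓ / m)
    rw [← harg] at h
    simpa [torsionValue, qc, div_mul_eq_mul_div] using h
  have hfactor : w ^ (-k) * (p * τ + q) ^ k = (m * (r * τ + s)) ^ k := by
    have hw₀ : w ≠ 0 := right_ne_zero_of_mul (hw ▸ div_ne_zero hpq hrs)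
    have hpq_eq : (p : ℂ) * τ + q = w * (m * (r * τ + s)) := by
      rw [← mul_assoc, mul_comm w, hw, div_mul_cancel₀ _ hrs]
    rw [hpq_eq, mul_zpow, ← mul_assoc, ← zpow_add₀ hw₀, neg_add_cancel, zpow_zero, one_mul]
  simp only [torsionSum, hterm, ← Finset.mul_sum, ← mul_assoc, hfactor]

lemma differentiableOn_torsionSum (hm : 0 < m) :
    DifferentiableOn ℂ φ.torsionSum {τ : ℂ | 0 < τ.im} := by
  have hne : ∀ τ ∈ {τ : ℂ | 0 < τ.im}, τ ≠ 0 := by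
    rintro τ hτ rfl
    simp at hτ
  have hm₀ : (m : ℂ) ≠ 0 := by exact_mod_cast hm.ne'
  have hterm (ℓ : ℕ) :
      DifferentiableOn ℂ (fun τ => φ.toFun (-1 / (m * τ)) (ℓ / m)) {τ : ℂ | 0 < τ.im} := by
    refine φ.holo.comp (f := fun τ : ℂ => (-1 / (m * τ), (ℓ / m : ℂ))) ?_ fun τ hτ => ?_
    · exact ((differentiableOn_const _).div (differentiableOn_id.const_mul _)
        fun τ hτ => mul_ne_zero hm₀ (hne τ hτ)).prodMk (differentiableOn_const _)
    · have him := im_moebius_pos (a := 0) (b := -1) (c := m) (d := 0) (by simpa using hm) hτ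
      exact ⟨by simpa using him, Set.mem_univ _⟩
  refine DifferentiableOn.mul (fun τ hτ => ?_) (DifferentiableOn.fun_sum fun ℓ _ => hterm ℓ)
  exact (differentiableAt_zpow.mpr (Or.inl (hne τ hτ))).differentiableWithinAt

lemma torsionValue_div_intCast (hm : 0 < m) (l n : ℤ) {τ : ℂ} (hτ : 0 < τ.im) :
    φ.torsionValue (l / m) n τ = φ.torsionValue (l / m) 0 τ := by
  have hm₀ : (m : ℂ) ≠ 0 := by exact_mod_cast hm.ne'
  have hqc : qc (m * (l / m * n)) = 1 := by
    rw [← mul_assoc, mul_div_cancel₀ _ hm₀, ← Int.cast_mul, qc_intCast]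
  simpa [hqc] using φ.torsionValue_add_int (l / m) 0 0 n hτ

lemma periodic_torsionValue_div (hm : 0 < m) {τ : ℂ} (hτ : 0 < τ.im) :
    Function.Periodic (fun n : ℤ => φ.torsionValue (n / m) 0 τ) m := by
  intro n
  have hm₀ : (m : ℂ) ≠ 0 := by exact_mod_cast hm.ne'
  simpa [add_div, hm₀, qc] using φ.torsionValue_add_int (n / m) 0 1 0 hτ

lemma torsionSum_moebius (hm : 0 < m) {a b c d : ℤ} (hdet : a * d - b * c = 1) (hc : (m : ℤ) ∣ c)
    {τ : ℂ} (hτ : 0 < τ.im) :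
    φ.torsionSum ((a * τ + b) / (c * τ + d)) = (c * τ + d) ^ k * φ.torsionSum τ := by
  obtain ⟨c, rfl⟩ := hc
  have := NeZero.of_pos hm
  have hm₀ : (m : ℂ) ≠ 0 := by exact_mod_cast hm.ne'
  have him : 0 < (m * τ).im := by simpa using mul_pos (Nat.cast_pos.mpr hm) hτ
  have hcop : IsCoprime a m := ⟨d, -(b * c), by linear_combination hdet⟩
  have hterm (ℓ : ℕ) : φ.torsionValue (ℓ * a / m) (ℓ * (m * b : ℤ) / m) (m * τ) =
      φ.torsionValue ((a * ℓ : ℤ) / m) 0 (m * τ) := by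
    rw [← φ.torsionValue_div_intCast hm (a * ℓ) (ℓ * b) him]
    congr 1 <;> push_cast <;> field_simp
  have htransformed := φ.torsionSum_eq_sum_torsionValue (p := a) (q := m * b) (r := c) (s := d)
    (by linear_combination hdet) him (w := (a * τ + b) / ((m * c : ℤ) * τ + d))
    (by push_cast; ring)
  have hself : φ.torsionSum τ = m ^ k * ∑ ℓ ∈ Finset.range m, φ.torsionValue (ℓ / m) 0 (m * τ) := by
    simpa using φ.torsionSum_eq_sum_torsionValue (p := 1) (q := 0) (r := 0) (s := 1)
      (by norm_num) him (w := τ) (by simp)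
  have hperm := sum_range_mul_of_periodic (φ.periodic_torsionValue_div hm him) hcop
  have hfactor : m * (c * (m * τ) + d) = ((m * c : ℤ) * τ + d) * m := by
    push_cast
    ring
  simp only [hterm, hperm, hfactor, Int.cast_natCast] at htransformed
  rw [htransformed, hself, mul_zpow, mul_assoc]

lemma torsionSum_slash {a b c d p q r s B : ℤ} {A D : ℕ} (hdet : a * d - b * c = 1)
    (hdet' : p * s - q * r = 1) (hA : 0 < A) (hD : 0 < D)
    (hmul : !![m * a, m * b; c, d] = !![p, q; r, s] * !![(A : ℤ), B; 0, D]) {τ : ℂ}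
    (hτ : 0 < τ.im) :
    (c * τ + d) ^ (-k) * φ.torsionSum ((a * τ + b) / (c * τ + d)) =
      (m / D) ^ k *
        ∑ ℓ ∈ Finset.range m, φ.torsionValue (ℓ * p / m) (ℓ * q / m) ((A * τ + B) / D) := by
  obtain ⟨⟨hma, hmb⟩, hc, hd⟩ : (m * a = p * A ∧ m * b = p * B + q * D) ∧
      c = r * A ∧ d = r * B + s * D := by
    simpa [← Matrix.ext_iff, Fin.forall_fin_two] using hmul
  have hD₀ : (D : ℂ) ≠ 0 := by exact_mod_cast hD.ne'
  have hcd : (c : ℂ) * τ + d ≠ 0 :=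
    intCast_mul_add_ne_zero_of_isCoprime ⟨-b, a, by linear_combination hdet⟩ hτ
  have hnum : p * ((A * τ + B) / D) + q = m * (a * τ + b) / D := by
    have hmaC : (m : ℂ) * a = p * A := by exact_mod_cast hma
    have hmbC : (m : ℂ) * b = p * B + q * D := by exact_mod_cast hmb
    field_simp
    linear_combination -τ * hmaC - hmbC
  have hden : r * ((A * τ + B) / D) + s = (c * τ + d) / D := by
    rw [hc, hd]
    push_cast
    field_simp
    ring
  have hw : m * ((a * τ + b) / (c * τ + d)) =
      (p * ((A * τ + B) / D) + q) / (r * ((A * τ + B) / D) + s) := by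
    rw [hnum, hden, div_div_div_cancel_right₀ hD₀, mul_div_assoc]
  rw [φ.torsionSum_eq_sum_torsionValue hdet' (im_affine_pos hA hD B hτ) hw, hden, mul_div_left_comm,
    mul_zpow, ← mul_assoc, ← mul_assoc, _root_.zpow_neg, inv_mul_cancel₀ (zpow_ne_zero k hcd),
    one_mul]

lemma meromAtCusps_torsionSum (hm : 0 < m) : MeromAtCusps k φ.torsionSum := by
  refine meromAtCusps_of_hasFractionalQExp fun a b c d hdet => ?_
  have hdet_pos : 0 < !![m * a, m * b; c, d].det := by
    rw [det_fin_two_of, mul_assoc, mul_assoc, ← mul_sub, hdet, mul_one]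
    exact_mod_cast hm
  obtain ⟨γ, A, D, B, hA, hD, hmul⟩ := exists_eq_specialLinearGroup_mul_upperTriangular _ hdet_pos
  induction γ using SpecialLinearGroup.fin_two_induction with | h p q r s hdet' =>
  have hexp := ((HasFractionalQExp.sum fun ℓ (_ : ℓ ∈ Finset.range m) =>
    φ.hasFractionalQExp_torsionValue hm (ℓ * p) (ℓ * q)).comp_affine hA hD B).const_mul
      ((m / D : ℂ) ^ k)
  push_cast at hexp
  exact ⟨m ^ 2 * D, by positivity,
    hexp.congr fun τ hτ => φ.torsionSum_slash hdet hdet' hA hD hmul hτ⟩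

end TorsionSum

end WeakJacobiForm

theorem jacobi_to_modular_form_general {k : ℤ} {m : ℕ} (hm : 0 < m) (φ : WeakJacobiForm k m) :
    DifferentiableOn ℂ φ.torsionSum {τ : ℂ | 0 < τ.im} ∧
      (∀ a b c d : ℤ, a * d - b * c = 1 → (m : ℤ) ∣ c → ∀ τ : ℂ, 0 < τ.im →
        φ.torsionSum ((a * τ + b) / (c * τ + d)) = (c * τ + d) ^ k * φ.torsionSum τ) ∧
      MeromAtCusps k φ.torsionSum :=
  ⟨φ.differentiableOn_torsionSum hm,
    fun _ _ _ _ hdet hc _ hτ => φ.torsionSum_moebius hm hdet hc hτ,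
    φ.meromAtCusps_torsionSum hm⟩

/-- **Lemma 2.2.** If `φ` is a weakly holomorphic Jacobi form of even weight `k` and index `m`,
then `φ̃(τ) = τ^{-k} Σ_{ℓ=0}^{m-1} φ(-1/(mτ), ℓ/m)` is a weakly holomorphic modular form of
weight `k` on `Γ₀(m)`. -/
theorem jacobi_to_modular_form (k : ℤ) (hk : Even k) (m : ℕ) (hm : 0 < m)
    (φ : WeakJacobiForm k m) (F : ℂ → ℂ)
    (hF : ∀ τ : ℂ, F τ =
      τ ^ (-k) * ∑ ℓ ∈ Finset.range m, φ.toFun (-1 / ((m : ℂ) * τ)) ((ℓ : ℂ) / (m : ℂ))) :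
    DifferentiableOn ℂ F {τ : ℂ | 0 < τ.im} ∧
      (∀ a b c d : ℤ, a * d - b * c = 1 → (m : ℤ) ∣ c → ∀ τ : ℂ, 0 < τ.im →
        F (((a : ℂ) * τ + b) / ((c : ℂ) * τ + d)) = ((c : ℂ) * τ + d) ^ k * F τ) ∧
      MeromAtCusps k F := by
  obtain rfl : F = φ.torsionSum := funext hF
  exact jacobi_to_modular_form_general hm φ
end

section
/- Let N ∈ {2, 3, 5, 6, 7, 10, 13} and let f be a weakly holomorphic modular function on the Fricke group Γ₀*(N). Then for every positive integer d with -d a square mod 4N and every h mod 2N with h² ≡ -d (mod 4N), one has t_f^{(h)}(d) = 2^{μ_N(d)} · t_f*(d), where μ_N(d) is the number of prime factors of gcd(N, d). In particular t_f^{(h)}(d) is independent of the choice of h. -/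
open Complex Matrix

/-! Let `H ≤ Γ₀*(N)` consist of the Atkin–Lehner matrices `W_e` with `e ∣ gcd(N, d)`. Acting on a
form `[a, b, c]` of `𝒬_{d,N}`, a matrix `W_e` fixes `b` modulo `2N/e` and negates it modulo `2e`.
Hence it carries a form of `𝒬_{d,N,h}` back into `𝒬_{d,N,h}` if and only if `e ∣ b`, which amounts
to `e ∣ d` as `b² ≡ -d (mod e)` and `e` is square-free; and since `N` splits as `e · k` with `h ≡ b`
modulo `2k` and `h ≡ -b` modulo `2e`, every `Γ₀*(N)`-orbit in `𝒬_{d,N}` meets `𝒬_{d,N,h}`. So the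
`Γ₀*(N)`-trace over `𝒬_{d,N}` is the `H`-trace over `𝒬_{d,N,h}`. Passing from `H` to `Γ₀(N)`
multiplies traces by the index, which is the number `2^{μ_N(d)}` of divisors of `gcd(N, d)`. -/

section OrbitTrace

open MulAction Function

theorem finsum_comp_eq_finsum_ncard_fiber_nsmul {α β M : Type*} [AddCommMonoid M]
    [IsAddTorsionFree M] {π : α → β} (hπ : ∀ b, (π ⁻¹' {b}).Finite) (f : β → M) :
    ∑ᶠ a, f (π a) = ∑ᶠ b, (π ⁻¹' {b}).ncard • f b := by
  classical
  have support_preimage :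
      support (fun a => f (π a)) = π ⁻¹' support fun b => (π ⁻¹' {b}).ncard • f b := by
    ext a
    have hcard : (π ⁻¹' {π a}).ncard ≠ 0 := ((Set.ncard_pos (hπ _)).2 ⟨a, rfl⟩).ne'
    simp only [Set.mem_preimage, mem_support, ne_eq, nsmul_eq_zero_iff_right hcard]
  have support_subset_range : support (fun b => (π ⁻¹' {b}).ncard • f b) ⊆ Set.range π := by
    intro b hb
    by_contra hrange
    exact hb (by simp [Set.preimage_singleton_eq_empty.2 hrange])
  by_cases hfin : (support fun b => (π ⁻¹' {b}).ncard • f b).Finite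
  · have hfin' : (support fun a => f (π a)).Finite :=
      support_preimage ▸ hfin.preimage' fun b _ => hπ b
    have himage : hfin'.toFinset.image π = hfin.toFinset := by
      ext b
      simp only [Finset.mem_image, Set.Finite.mem_toFinset, support_preimage, Set.mem_preimage]
      exact ⟨by rintro ⟨a, ha, rfl⟩; exact ha, fun hb => by
        obtain ⟨a, rfl⟩ := support_subset_range hb; exact ⟨a, hb, rfl⟩⟩
    rw [finsum_eq_sum _ hfin', finsum_eq_sum _ hfin, Finset.sum_comp f π, himage]
    refine Finset.sum_congr rfl fun b hb => ?_
    rw [← Set.ncard_coe_finset, Finset.coe_filter]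
    congr 2
    ext a
    simp only [Set.Finite.mem_toFinset, support_preimage, Set.mem_preimage, Set.mem_ofPred_eq,
      Set.mem_singleton_iff, and_iff_right_iff_imp]
    rintro rfl
    exact hfin.mem_toFinset.1 hb
  · rw [finsum_of_infinite_support hfin, finsum_of_infinite_support]
    rw [support_preimage]
    exact fun h => hfin ((h.image π).subset
      (Set.image_preimage_eq_of_subset support_subset_range).ge)

variable {G X k : Type*} [Group G] [MulAction G X]

/-- Orbit equivalence under a subgroup `Γ` of `G`, restricted to a subset `S` that need not be
stable under `Γ`. -/
def orbitRelOn (Γ : Subgroup G) (S : Set X) : Setoid S :=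
  (orbitRel Γ X).comap (↑)

theorem orbitRelOn_iff {Γ : Subgroup G} {S : Set X} {x y : S} :
    orbitRelOn Γ S x y ↔ ∃ g ∈ Γ, g • y.1 = x.1 :=
  mem_orbit_iff.trans (by simp [Subgroup.smul_def])

/-- The trace `∑ F(x) / |Γ_x|` over representatives `x` of the `Γ`-orbits meeting `S`: the integral
of `F` over the quotient stack `[S / Γ]`. It is `0` by the junk value of `∑ᶠ` when infinitely many
terms are nonzero. -/
noncomputable def orbitTrace [Field k] (Γ : Subgroup G) (F : X → k) (S : Set X) : k :=
  ∑ᶠ ω : Quotient (orbitRelOn Γ S), F ω.out.1 / (Nat.card (stabilizer Γ ω.out.1) : k)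

theorem card_stabilizer_subgroup_smul {Γ : Subgroup G} {g : G} (hg : g ∈ Γ) (x : X) :
    Nat.card (stabilizer Γ (g • x)) = Nat.card (stabilizer Γ x) :=
  (Nat.card_congr (stabilizerEquivStabilizer (g := (⟨g, hg⟩ : Γ)) rfl).toEquiv).symm

variable {Γ : Subgroup G} {F : X → k} {S : Set X}

theorem exists_smul_eq_out (Γ : Subgroup G) (x : S) :
    ∃ g ∈ Γ, g • x.1 = (Quotient.mk (orbitRelOn Γ S) x).out.1 :=
  orbitRelOn_iff.1 (Quotient.mk_out (s := orbitRelOn Γ S) x)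

theorem div_card_stabilizer_out [Field k] (hF : ∀ g ∈ Γ, ∀ x ∈ S, F (g • x) = F x) (x : S) :
    F (Quotient.mk (orbitRelOn Γ S) x).out.1 /
        (Nat.card (stabilizer Γ (Quotient.mk (orbitRelOn Γ S) x).out.1) : k) =
      F x.1 / (Nat.card (stabilizer Γ x.1) : k) := by
  obtain ⟨g, hg, hgx⟩ := exists_smul_eq_out Γ x
  rw [← hgx, hF g hg x x.2, card_stabilizer_subgroup_smul hg]

theorem orbitTrace_map_subtype [Field k] {H : Subgroup G} (K : Subgroup H) (F : X → k)
    (S : Set X) : orbitTrace (K.map H.subtype) F S = orbitTrace K F S := by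
  have hrel : orbitRelOn (K.map H.subtype) S = orbitRelOn K S := by
    ext x y
    simp [orbitRelOn_iff, Subgroup.smul_def]
  have hcard (x : X) :
      Nat.card (stabilizer (K.map H.subtype) x) = Nat.card (stabilizer K x) :=
    Nat.card_congr ((K.equivMapOfInjective _ H.subtype_injective).toEquiv.subtypeEquiv
      fun _ => Iff.rfl).symm
  rw [orbitTrace, hrel]
  simp only [hcard]
  rfl

theorem orbitTrace_eq_of_meets_orbits [Field k] {H : Subgroup G} {T : Set X} (hHΓ : H ≤ Γ)
    (hST : S ⊆ T) (hmem : ∀ g ∈ Γ, ∀ x ∈ S, g • x ∈ S → g ∈ H)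
    (hmeet : ∀ x ∈ T, ∃ g ∈ Γ, g • x ∈ S) (hF : ∀ g ∈ Γ, ∀ x ∈ T, F (g • x) = F x) :
    orbitTrace H F S = orbitTrace Γ F T := by
  have stabilizer_card {x : X} (hx : x ∈ S) :
      Nat.card (stabilizer H x) = Nat.card (stabilizer Γ x) :=
    Nat.card_congr
      { toFun g := ⟨⟨g.1, hHΓ g.1.2⟩, g.2⟩
        invFun g := ⟨⟨g.1, hmem g.1 g.1.2 x hx ((mem_stabilizer_iff.1 g.2).symm ▸ hx)⟩, g.2⟩ }
  have hle (x y : S) (hxy : orbitRelOn H S x y) :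
      orbitRelOn Γ T (Set.inclusion hST x) (Set.inclusion hST y) := by
    obtain ⟨g, hg, hgy⟩ := orbitRelOn_iff.1 hxy
    exact orbitRelOn_iff.2 ⟨g, hHΓ hg, hgy⟩
  refine finsum_eq_of_bijective (Quotient.map (Set.inclusion hST) hle) ⟨?_, ?_⟩ ?_
  · rintro ⟨x⟩ ⟨y⟩ hxy
    obtain ⟨g, hg, hgy⟩ := orbitRelOn_iff.1 (Quotient.exact hxy)
    have hgyx : g • y.1 = x.1 := hgy
    exact Quotient.sound (orbitRelOn_iff.2 ⟨g, hmem g hg y y.2 (hgyx ▸ x.2), hgyx⟩)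
  · rintro ⟨x⟩
    obtain ⟨g, hg, hgx⟩ := hmeet x x.2
    exact ⟨Quotient.mk _ ⟨g • x.1, hgx⟩, Quotient.sound (orbitRelOn_iff.2 ⟨g, hg, rfl⟩)⟩
  · rintro ⟨x⟩
    refine (div_card_stabilizer_out (fun g hg x hx => hF g (hHΓ hg) x (hST hx)) x).trans ?_
    rw [stabilizer_card x.2]
    exact (div_card_stabilizer_out hF (Set.inclusion hST x)).symm

theorem mem_stabilizer_mk_iff {K : Subgroup G} {g γ : G} :
    γ ∈ stabilizer G (g : G ⧸ K) ↔ g⁻¹ * γ * g ∈ K := by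
  rw [mem_stabilizer_iff, eq_comm, Quotient.smul_coe, QuotientGroup.eq, smul_eq_mul, mul_assoc]

theorem mul_mul_inv_mem_stabilizer_iff {x : X} {g γ : G} :
    g * γ * g⁻¹ ∈ stabilizer G x ↔ γ ∈ stabilizer G (g⁻¹ • x) := by
  simp only [mem_stabilizer_iff, mul_smul, smul_eq_iff_eq_inv_smul]

theorem ncard_orbit_mul_card_stabilizer (K : Subgroup G) (x : X) (g : G) :
    (orbit (stabilizer G x) (g : G ⧸ K)).ncard * Nat.card (stabilizer K (g⁻¹ • x)) =
      Nat.card (stabilizer G x) := by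
  have hcard : Nat.card (stabilizer K (g⁻¹ • x)) =
      Nat.card (stabilizer (stabilizer G x) (g : G ⧸ K)) :=
    Nat.card_congr
      { toFun γ := ⟨⟨g * γ * g⁻¹, mul_mul_inv_mem_stabilizer_iff.2 γ.2⟩,
          mem_stabilizer_mk_iff.2 (by simp [mul_assoc])⟩
        invFun γ := ⟨⟨g⁻¹ * γ * g, mem_stabilizer_mk_iff.1 γ.2⟩,
          mul_mul_inv_mem_stabilizer_iff.1 (by simp [mul_assoc])⟩
        left_inv γ := by simp [mul_assoc]
        right_inv γ := by simp [mul_assoc] }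
  rw [hcard, ← index_stabilizer, Subgroup.index_mul_card]

/-- The map `gK ↦ [g⁻¹ • x]` from `G ⧸ K` to the `K`-orbits in a `G`-stable set `S`, for `x ∈ S`.
Its image is the set of `K`-orbits inside `G • x`. -/
def orbitOfCoset (hS : ∀ g : G, ∀ x ∈ S, g • x ∈ S) (K : Subgroup G) (x : S) :
    G ⧸ K → Quotient (orbitRelOn K S) :=
  Quotient.lift (fun g : G => Quotient.mk _ ⟨g⁻¹ • x.1, hS _ x x.2⟩) fun g g' h =>
    Quotient.sound (orbitRelOn_iff.2
      ⟨g⁻¹ * g', QuotientGroup.leftRel_apply.1 h, by simp [mul_smul]⟩)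

theorem orbitOfCoset_fiber (hS : ∀ g : G, ∀ x ∈ S, g • x ∈ S) (K : Subgroup G) (x : S) (g : G) :
    orbitOfCoset hS K x ⁻¹' {orbitOfCoset hS K x g} = orbit (stabilizer G x.1) (g : G ⧸ K) := by
  ext q
  obtain ⟨g', rfl⟩ := QuotientGroup.mk_surjective q
  constructor
  · intro h
    obtain ⟨κ, hκ, hκx⟩ := orbitRelOn_iff.1 (Quotient.exact h)
    have hκx : κ • g⁻¹ • x.1 = g'⁻¹ • x.1 := hκx
    refine ⟨⟨g' * κ * g⁻¹, ?_⟩, ?_⟩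
    · rw [mem_stabilizer_iff, mul_smul, mul_smul, hκx, smul_inv_smul]
    · exact QuotientGroup.eq.2 (by simpa [Subgroup.smul_def, mul_assoc] using hκ)
  · rintro ⟨s, hs⟩
    refine Quotient.sound (orbitRelOn_iff.2 ⟨g'⁻¹ * s * g, ?_, ?_⟩)
    · have := QuotientGroup.eq.1 hs.symm
      simpa [Subgroup.smul_def, mul_assoc] using this
    · simp [mul_smul, mem_stabilizer_iff.1 s.2]

theorem exists_smul_eq_out_orbitOfCoset (hS : ∀ g : G, ∀ x ∈ S, g • x ∈ S) (K : Subgroup G)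
    (x : S) (q : G ⧸ K) : ∃ g : G, g • x.1 = (orbitOfCoset hS K x q).out.1 := by
  obtain ⟨g, rfl⟩ := QuotientGroup.mk_surjective q
  obtain ⟨κ, -, hκ⟩ := exists_smul_eq_out K (⟨g⁻¹ • x.1, hS _ x x.2⟩ : S)
  exact ⟨κ * g⁻¹, (mul_smul κ g⁻¹ x.1).trans hκ⟩

/-- The surjection `([x], gK) ↦ [g⁻¹ • x]` from pairs of a `G`-orbit in `S` and a coset onto the
`K`-orbits in `S`. It depends on the chosen representatives of the `G`-orbits. -/
noncomputable def orbitOfPair (hS : ∀ g : G, ∀ x ∈ S, g • x ∈ S) (K : Subgroup G)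
    (p : Quotient (orbitRelOn (⊤ : Subgroup G) S) × G ⧸ K) : Quotient (orbitRelOn K S) :=
  orbitOfCoset hS K p.1.out p.2

theorem exists_orbitOfPair_eq (hS : ∀ g : G, ∀ x ∈ S, g • x ∈ S) (K : Subgroup G)
    (ω : Quotient (orbitRelOn K S)) :
    ∃ b, ∃ g : G, orbitOfPair hS K (b, (g : G ⧸ K)) = ω := by
  obtain ⟨y, rfl⟩ := Quotient.mk_surjective ω
  obtain ⟨g, -, hg⟩ := exists_smul_eq_out (⊤ : Subgroup G) y
  exact ⟨_, g, congrArg (Quotient.mk (orbitRelOn K S)) (Subtype.ext (inv_smul_eq_iff.2 hg.symm))⟩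

theorem orbitOfPair_fiber (hS : ∀ g : G, ∀ x ∈ S, g • x ∈ S) (K : Subgroup G)
    (b : Quotient (orbitRelOn (⊤ : Subgroup G) S)) (g : G) :
    orbitOfPair hS K ⁻¹' {orbitOfPair hS K (b, (g : G ⧸ K))} =
      Prod.mk b '' orbit (stabilizer G b.out.1) (g : G ⧸ K) := by
  rw [← orbitOfCoset_fiber hS]
  ext ⟨b', q⟩
  simp only [Set.mem_preimage, Set.mem_singleton_iff, Set.mem_image, Prod.mk.injEq]
  constructor
  · intro h
    obtain ⟨g₁, hg₁⟩ := exists_smul_eq_out_orbitOfCoset hS K b.out g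
    obtain ⟨g₂, hg₂⟩ := exists_smul_eq_out_orbitOfCoset hS K b'.out q
    have hout : orbitOfCoset hS K b'.out q = orbitOfCoset hS K b.out g := h
    have hb : b = b' := Quotient.out_equiv_out.1 ((orbitRelOn_iff (Γ := (⊤ : Subgroup G))).2
      ⟨g₁⁻¹ * g₂, trivial, by rw [mul_smul, hg₂, hout, ← hg₁, inv_smul_smul]⟩)
    subst hb
    exact ⟨q, hout, rfl, rfl⟩
  · rintro ⟨q, hq, rfl, rfl⟩
    exact hq

theorem finite_orbitOfPair_fiber (hS : ∀ g : G, ∀ x ∈ S, g • x ∈ S) (K : Subgroup G)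
    [K.FiniteIndex] (ω : Quotient (orbitRelOn K S)) : (orbitOfPair hS K ⁻¹' {ω}).Finite := by
  obtain ⟨b, g, rfl⟩ := exists_orbitOfPair_eq hS K ω
  exact orbitOfPair_fiber hS K b g ▸ (Set.toFinite _).image _

theorem ncard_orbitOfPair_fiber_mul_card_stabilizer (hS : ∀ g : G, ∀ x ∈ S, g • x ∈ S)
    (K : Subgroup G) (ω : Quotient (orbitRelOn K S)) :
    (orbitOfPair hS K ⁻¹' {ω}).ncard * Nat.card (stabilizer K ω.out.1) =
      Nat.card (stabilizer G ω.out.1) := by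
  obtain ⟨b, g, rfl⟩ := exists_orbitOfPair_eq hS K ω
  obtain ⟨κ, hκ, hout⟩ := exists_smul_eq_out K (⟨g⁻¹ • b.out.1, hS _ _ b.out.2⟩ : S)
  have hout : κ • g⁻¹ • b.out.1 = (orbitOfPair hS K (b, (g : G ⧸ K))).out.1 := hout
  rw [← hout, card_stabilizer_subgroup_smul hκ, ← mul_smul,
    Nat.card_congr (stabilizerEquivStabilizer (g := κ * g⁻¹) rfl).symm.toEquiv,
    orbitOfPair_fiber, Set.ncard_image_of_injective _ (Prod.mk_right_injective b),
    ncard_orbit_mul_card_stabilizer]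

theorem ncard_orbitOfPair_fiber_nsmul_div [Field k] [CharZero k] {K : Subgroup G}
    [K.FiniteIndex] (hS : ∀ g : G, ∀ x ∈ S, g • x ∈ S) (F : X → k)
    (ω : Quotient (orbitRelOn K S)) :
    (orbitOfPair hS K ⁻¹' {ω}).ncard • (F ω.out.1 / (Nat.card (stabilizer G ω.out.1) : k)) =
      F ω.out.1 / (Nat.card (stabilizer K ω.out.1) : k) := by
  have hne : ((orbitOfPair hS K ⁻¹' {ω}).ncard : k) ≠ 0 := by
    obtain ⟨b, g, h⟩ := exists_orbitOfPair_eq hS K ω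
    exact Nat.cast_ne_zero.2 ((Set.ncard_pos (finite_orbitOfPair_fiber hS K ω)).2 ⟨_, h⟩).ne'
  rw [nsmul_eq_mul, ← ncard_orbitOfPair_fiber_mul_card_stabilizer hS, Nat.cast_mul,
    ← mul_div_assoc, mul_div_mul_left _ _ hne]

theorem orbitTrace_top [Field k] (F : X → k) (S : Set X) :
    orbitTrace (⊤ : Subgroup G) F S = ∑ᶠ ω : Quotient (orbitRelOn (⊤ : Subgroup G) S),
      F ω.out.1 / (Nat.card (stabilizer G ω.out.1) : k) :=
  finsum_congr fun ω => congrArg (fun n : ℕ => F ω.out.1 / (n : k)) <|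
    Nat.card_congr (Subgroup.topEquiv.toEquiv.subtypeEquiv fun _ => Iff.rfl)

/-- Both sides are the sum of `F(x) / |G_x|` over the pairs of a `G`-orbit `[x]` and a coset `gK`:
a `K`-orbit `[y]` inside `G • x` equals `[g⁻¹ • x]` for exactly `|G_x| / |K_y|` cosets. -/
theorem orbitTrace_eq_index_mul_orbitTrace_top [Field k] [CharZero k] {K : Subgroup G}
    [K.FiniteIndex] (hS : ∀ g : G, ∀ x ∈ S, g • x ∈ S) (hF : ∀ g : G, ∀ x ∈ S, F (g • x) = F x) :
    orbitTrace K F S = K.index * orbitTrace (⊤ : Subgroup G) F S := by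
  let w (x : X) : k := F x / (Nat.card (stabilizer G x) : k)
  have w_smul (g : G) (x : S) : w (g • x.1) = w x.1 := by
    simp only [w, hF g x x.2,
      Nat.card_congr (stabilizerEquivStabilizer (g := g) (a := x.1) rfl).symm.toEquiv]
  have w_orbitOfPair (p) : w (orbitOfPair hS K p).out = w p.1.out := by
    obtain ⟨g, hg⟩ := exists_smul_eq_out_orbitOfCoset hS K p.1.out p.2
    exact (congrArg w hg).symm.trans (w_smul g p.1.out)
  have fst_fiber (b : Quotient (orbitRelOn (⊤ : Subgroup G) S)) :
      (Prod.fst ⁻¹' {b} : Set (_ × G ⧸ K)) = Prod.mk b '' Set.univ := by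
    ext ⟨b', q⟩
    simp [eq_comm]
  have ncard_fst_fiber (b : Quotient (orbitRelOn (⊤ : Subgroup G) S)) :
      (Prod.fst ⁻¹' {b} : Set (_ × G ⧸ K)).ncard = K.index := by
    rw [fst_fiber, Set.ncard_image_of_injective _ (Prod.mk_right_injective b), Set.ncard_univ,
      Subgroup.index]
  calc orbitTrace K F S = ∑ᶠ ω, (orbitOfPair hS K ⁻¹' {ω}).ncard • w ω.out :=
        (finsum_congr (ncard_orbitOfPair_fiber_nsmul_div hS F)).symm
    _ = ∑ᶠ p, w (orbitOfPair hS K p).out :=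
        (finsum_comp_eq_finsum_ncard_fiber_nsmul (finite_orbitOfPair_fiber hS K)
          fun ω => w ω.out).symm
    _ = ∑ᶠ p : Quotient (orbitRelOn (⊤ : Subgroup G) S) × G ⧸ K, w p.1.out :=
        finsum_congr w_orbitOfPair
    _ = ∑ᶠ b : Quotient (orbitRelOn (⊤ : Subgroup G) S), K.index • w b.out :=
        (finsum_comp_eq_finsum_ncard_fiber_nsmul (fun b => Set.finite_of_ncard_ne_zero
          (ncard_fst_fiber b ▸ Subgroup.FiniteIndex.index_ne_zero)) fun b => w b.out).trans
          (finsum_congr fun b => by rw [ncard_fst_fiber])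
    _ = K.index * orbitTrace (⊤ : Subgroup G) F S := by
        simp only [nsmul_eq_mul, orbitTrace_top, mul_finsum, w]

theorem orbitTrace_eq_relIndex_mul_orbitTrace [Field k] [CharZero k] {K : Subgroup G}
    (hKΓ : K ≤ Γ) (hindex : K.relIndex Γ ≠ 0) (hS : ∀ g ∈ Γ, ∀ x ∈ S, g • x ∈ S)
    (hF : ∀ g ∈ Γ, ∀ x ∈ S, F (g • x) = F x) :
    orbitTrace K F S = K.relIndex Γ * orbitTrace Γ F S := by
  have : (K.subgroupOf Γ).FiniteIndex := ⟨hindex⟩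
  calc orbitTrace K F S = orbitTrace (K.subgroupOf Γ) F S := by
        rw [← orbitTrace_map_subtype, Subgroup.map_subgroupOf_eq_of_le hKΓ]
    _ = K.relIndex Γ * orbitTrace (⊤ : Subgroup Γ) F S :=
        orbitTrace_eq_index_mul_orbitTrace_top (fun g => hS g g.2) fun g => hF g g.2
    _ = K.relIndex Γ * orbitTrace Γ F S := by
        rw [← orbitTrace_map_subtype, ← MonoidHom.range_eq_map, Γ.range_subtype]

end OrbitTrace

section FormAction

/-- The left action `Q ↦ Q ∘ g⁻¹` on Gram matrices, for which `α_{g • Q} = g α_Q`. The relation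
`formRel` is its orbit equivalence. -/
instance : MulAction SL2R (Matrix (Fin 2) (Fin 2) ℝ) where
  smul g M := (g⁻¹.1)ᵀ * M * g⁻¹.1
  one_smul M := by change ((1 : SL2R)⁻¹.1)ᵀ * M * (1 : SL2R)⁻¹.1 = M; simp
  mul_smul g g' M := by
    change ((g * g')⁻¹.1)ᵀ * M * (g * g')⁻¹.1 = (g⁻¹.1)ᵀ * ((g'⁻¹.1)ᵀ * M * g'⁻¹.1) * g⁻¹.1
    simp only [_root_.mul_inv_rev, Matrix.SpecialLinearGroup.coe_mul, Matrix.transpose_mul,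
      Matrix.mul_assoc]

theorem inv_smul_form (g : SL2R) (M : Matrix (Fin 2) (Fin 2) ℝ) :
    g⁻¹ • M = (g.1)ᵀ * M * g.1 := by
  change ((g⁻¹)⁻¹.1)ᵀ * M * (g⁻¹)⁻¹.1 = _
  rw [inv_inv]

theorem formRel_eq_orbitRelOn (Γ : Subgroup SL2R) (S : Set (Matrix (Fin 2) (Fin 2) ℝ)) :
    formRel Γ S = orbitRelOn Γ S := by
  ext Q Q'
  simp only [formRel, orbitRelOn_iff, ← inv_smul_form, eq_inv_smul_iff]

theorem stabOrder_eq_card_stabilizer_div_two (Γ : Subgroup SL2R)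
    (M : Matrix (Fin 2) (Fin 2) ℝ) :
    stabOrder Γ M = Nat.card (MulAction.stabilizer Γ M) / 2 := by
  refine congrArg (· / 2) (Nat.card_congr
    ((Equiv.subtypeSubtypeEquivSubtypeInter (· ∈ Γ) fun g : SL2R => g • M = M).trans
      (Equiv.subtypeEquivRight fun g => and_congr_right fun _ => ?_)).symm)
  rw [← inv_smul_form, inv_smul_eq_iff, eq_comm]

theorem two_dvd_card_stabilizer {Γ : Subgroup SL2R} (hΓ : -1 ∈ Γ)
    (M : Matrix (Fin 2) (Fin 2) ℝ) : 2 ∣ Nat.card (MulAction.stabilizer Γ M) := by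
  have neg_one_smul_form : (⟨-1, hΓ⟩ : Γ) • M = M := by
    change ((-1 : SL2R)⁻¹.1)ᵀ * M * (-1 : SL2R)⁻¹.1 = M
    simp
  have neg_one_ne_one : (-1 : SL2R) ≠ 1 := by
    intro h
    have := congrFun (congrFun (congrArg Subtype.val h) 0) 0
    norm_num at this
  let γ : MulAction.stabilizer Γ M := ⟨⟨-1, hΓ⟩, neg_one_smul_form⟩
  have orderOf_γ : orderOf γ = 2 := orderOf_eq_prime
    (Subtype.ext (Subtype.ext (neg_one_sq : (-1 : SL2R) ^ 2 = 1)))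
    fun h => neg_one_ne_one (congrArg (fun x => x.1.1) h)
  exact orderOf_γ.symm.dvd.trans (orderOf_dvd_natCard γ)

theorem classTrace_eq_two_mul_orbitTrace {Γ : Subgroup SL2R} (hΓ : -1 ∈ Γ) (f : ℂ → ℂ)
    (S : Set (Matrix (Fin 2) (Fin 2) ℝ)) :
    classTrace Γ f S = 2 * orbitTrace Γ (f ∘ cmPointC) S := by
  rw [classTrace, formRel_eq_orbitRelOn, orbitTrace, mul_finsum]
  refine finsum_congr fun O => ?_
  rw [stabOrder_eq_card_stabilizer_div_two, Nat.cast_div (two_dvd_card_stabilizer hΓ _) two_ne_zero,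
    Nat.cast_ofNat, div_div_eq_mul_div, mul_comm, mul_div_assoc]
  rfl

end FormAction

section CMPoint

variable {M : Matrix (Fin 2) (Fin 2) ℝ}

/-- The value `Q(z, 1)` of the quadratic form with Gram matrix `M`. -/
def formEval (M : Matrix (Fin 2) (Fin 2) ℝ) (z : ℂ) : ℂ :=
  M 0 0 * z ^ 2 + (M 0 1 + M 1 0) * z + M 1 1

theorem posDef_smul (hM : M.PosDef) (g : SL2R) : (g • M).PosDef := by
  have isUnit_inv : IsUnit (g⁻¹.1) :=
    (Matrix.isUnit_iff_isUnit_det _).2 (by rw [g⁻¹.2]; exact isUnit_one)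
  have := (isUnit_inv.posDef_star_left_conjugate_iff).2 hM
  rwa [Matrix.star_eq_conjTranspose, Matrix.conjTranspose_eq_transpose_of_trivial] at this

theorem posDef_formMat {a b c : ℤ} (ha : 0 < a) (hdisc : b ^ 2 - 4 * a * c < 0) :
    (formMat a b c).PosDef := by
  have ha : (0 : ℝ) < a := by exact_mod_cast ha
  have hdisc : (b : ℝ) ^ 2 - 4 * a * c < 0 := by exact_mod_cast hdisc
  refine Matrix.PosDef.of_dotProduct_mulVec_pos ?_ fun v hv => ?_
  · ext i j
    fin_cases i <;> fin_cases j <;> simp [formMat]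
  · have eval_eq : star v ⬝ᵥ (formMat a b c *ᵥ v) =
        a * v 0 ^ 2 + b * (v 0 * v 1) + c * v 1 ^ 2 := by
      simp only [formMat, dotProduct, mulVec, Fin.sum_univ_two, Pi.star_apply, star_trivial,
        Matrix.of_apply, Matrix.cons_val_zero, Matrix.cons_val_one]
      ring
    have complete_square : 4 * a * (a * v 0 ^ 2 + b * (v 0 * v 1) + c * v 1 ^ 2) =
        (2 * a * v 0 + b * v 1) ^ 2 + -(b ^ 2 - 4 * a * c) * v 1 ^ 2 := by ring
    rw [eval_eq]
    refine pos_of_mul_pos_right (complete_square ▸ ?_) (mul_pos four_pos ha).le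
    by_cases hv1 : v 1 = 0
    · have hv0 : v 0 ≠ 0 := fun hv0 => hv (funext (Fin.forall_fin_two.2 ⟨hv0, hv1⟩))
      rw [hv1, mul_zero, add_zero, zero_pow two_ne_zero, mul_zero, add_zero]
      positivity
    · have := mul_pos (neg_pos.2 hdisc) (sq_pos_of_ne_zero hv1)
      positivity

theorem cmPointC_im_pos (hM : M.PosDef) : 0 < (cmPointC M).im := by
  rw [cmPointC, Complex.div_ofReal_im]
  simpa using div_pos (Real.sqrt_pos.2 hM.det_pos) hM.diag_pos

theorem formEval_eq_zero_iff (hM : M.PosDef) {z : ℂ} (hz : 0 < z.im) :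
    formEval M z = 0 ↔ z = cmPointC M := by
  have ha : (0 : ℝ) < M 0 0 := hM.diag_pos
  have hsymm : M 1 0 = M 0 1 := by simpa using hM.isHermitian.apply 0 1
  have hs : 0 < √M.det := Real.sqrt_pos.2 hM.det_pos
  have hs2 : (√M.det : ℂ) ^ 2 = M 0 0 * M 1 1 - M 0 1 ^ 2 := by
    rw [← Complex.ofReal_pow, Real.sq_sqrt hM.det_pos.le, Matrix.det_fin_two, hsymm]
    push_cast
    ring
  have factorization : M 0 0 * formEval M z =
      (z * M 0 0 - (-M 0 1 + I * √M.det)) * (M 0 0 * z + M 0 1 + I * √M.det) := by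
    rw [formEval, hsymm]
    linear_combination (√M.det : ℂ) ^ 2 * I_sq - hs2
  have second_factor_ne_zero : M 0 0 * z + M 0 1 + I * √M.det ≠ 0 := by
    intro h
    have him : M 0 0 * z.im + √M.det = 0 := by simpa using congrArg Complex.im h
    nlinarith
  have ha' : (M 0 0 : ℂ) ≠ 0 := Complex.ofReal_ne_zero.2 ha.ne'
  calc formEval M z = 0 ↔ (M 0 0 : ℂ) * formEval M z = 0 := (mul_eq_zero_iff_left ha').symm
    _ ↔ z * M 0 0 - (-M 0 1 + I * √M.det) = 0 := by
      rw [factorization, mul_eq_zero_iff_right second_factor_ne_zero]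
    _ ↔ z = cmPointC M := by rw [cmPointC, eq_div_iff ha', sub_eq_zero, Complex.ofReal_neg]

theorem denom_ne_zero (g : SL2R) {z : ℂ} (hz : 0 < z.im) :
    ((g.1 1 0 : ℝ) : ℂ) * z + (g.1 1 1 : ℝ) ≠ 0 :=
  UpperHalfPlane.denom_ne_zero (g : GL (Fin 2) ℝ) ⟨z, hz⟩

theorem moebius_im_pos (g : SL2R) {z : ℂ} (hz : 0 < z.im) : 0 < (moebius g z).im := by
  have moebius_eq : moebius g z = ↑(g • (⟨z, hz⟩ : UpperHalfPlane)) :=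
    (UpperHalfPlane.coe_specialLinearGroup_apply g ⟨z, hz⟩).symm
  exact moebius_eq ▸ UpperHalfPlane.coe_im_pos _

theorem formEval_inv_smul (g : SL2R) (M : Matrix (Fin 2) (Fin 2) ℝ) {z : ℂ} (hz : 0 < z.im) :
    formEval (g⁻¹ • M) z =
      ((g.1 1 0 : ℝ) * z + (g.1 1 1 : ℝ)) ^ 2 * formEval M (moebius g z) := by
  have hden := denom_ne_zero g hz
  simp only [inv_smul_form, formEval, moebius, Matrix.mul_apply, Matrix.transpose_apply,
    Fin.sum_univ_two]
  push_cast
  field_simp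
  ring

theorem cmPointC_smul (hM : M.PosDef) (g : SL2R) :
    cmPointC (g • M) = moebius g (cmPointC M) := by
  have him := cmPointC_im_pos hM
  have hzero := (formEval_eq_zero_iff hM him).2 rfl
  rw [← inv_smul_smul g M, formEval_inv_smul g _ (by rwa [inv_smul_smul]), inv_smul_smul,
    mul_eq_zero_iff_left (pow_ne_zero 2 (denom_ne_zero g him)),
    formEval_eq_zero_iff (posDef_smul hM g) (moebius_im_pos g him)] at hzero
  exact hzero.symm

end CMPoint

section AtkinLehner

variable {N e k : ℕ} {g g' : SL2R}

/-- The integral matrix `√e W_e`, of determinant `e` when `W_e ∈ SL(2, ℝ)`. -/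
def atkinLehnerMatrix (N e : ℕ) (x y z w : ℤ) : Matrix (Fin 2) (Fin 2) ℤ :=
  !![x * e, y; z * N, w * e]

theorem atkinLehnerMatrix_map (N e : ℕ) (x y z w : ℤ) :
    (atkinLehnerMatrix N e x y z w).map ((↑) : ℤ → ℝ) =
      !![(x : ℝ) * e, (y : ℝ); (z : ℝ) * N, (w : ℝ) * e] := by
  ext i j
  fin_cases i <;> fin_cases j <;> simp [atkinLehnerMatrix]

theorem pos_of_mem_atkinLehnerSet (hg : g ∈ atkinLehnerSet N e) : 0 < e := by
  obtain ⟨x, y, z, w, hg⟩ := hg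
  refine Nat.pos_of_ne_zero ?_
  rintro rfl
  have hdet := g.2
  simp [hg] at hdet

theorem mem_atkinLehnerSet_iff (he : 0 < e) :
    g ∈ atkinLehnerSet N e ↔
      ∃ x y z w, √(e : ℝ) • g.1 = (atkinLehnerMatrix N e x y z w).map ((↑) : ℤ → ℝ) := by
  have hs : √(e : ℝ) ≠ 0 := (Real.sqrt_pos.2 (Nat.cast_pos.2 he)).ne'
  simp only [atkinLehnerMatrix_map, ← eq_inv_smul_iff₀ hs]
  rfl

theorem exists_smul_eq_atkinLehnerMatrix (hg : g ∈ atkinLehnerSet N e) :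
    ∃ x y z w, √(e : ℝ) • g.1 = (atkinLehnerMatrix N e x y z w).map ((↑) : ℤ → ℝ) :=
  (mem_atkinLehnerSet_iff (pos_of_mem_atkinLehnerSet hg)).1 hg

theorem det_eq_of_sqrt_smul_eq_map {A : Matrix (Fin 2) (Fin 2) ℤ}
    (hA : √(e : ℝ) • g.1 = A.map ((↑) : ℤ → ℝ)) : A.det = e := by
  have hdet : (A.det : ℝ) = e := calc
    (A.det : ℝ) = (A.map ((↑) : ℤ → ℝ)).det := Int.cast_det A
    _ = √(e : ℝ) ^ 2 := by rw [← hA, Matrix.det_smul, g.2, mul_one, Fintype.card_fin]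
    _ = e := Real.sq_sqrt e.cast_nonneg
  exact_mod_cast hdet

theorem det_params_eq_one {x y z w : ℤ}
    (hg : √(e : ℝ) • g.1 = (atkinLehnerMatrix (e * k) e x y z w).map ((↑) : ℤ → ℝ))
    (he : 0 < e) : x * w * e - y * z * k = 1 := by
  have hdet := det_eq_of_sqrt_smul_eq_map hg
  rw [atkinLehnerMatrix, Matrix.det_fin_two_of, Nat.cast_mul] at hdet
  refine mul_left_cancel₀ (Nat.cast_ne_zero.2 he.ne' : (e : ℤ) ≠ 0) ?_
  linear_combination hdet

theorem atkinLehnerMatrix_mul (k u v m : ℕ) (x y z w x' y' z' w' : ℤ) :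
    atkinLehnerMatrix (k * u * v * m) (k * u) x y z w *
        atkinLehnerMatrix (k * u * v * m) (k * v) x' y' z' w' =
      (k : ℤ) • atkinLehnerMatrix (k * u * v * m) (u * v) (x * x' * k + y * z' * m)
        (x * u * y' + y * w' * v) (z * x' * v + w * u * z') (z * y' * m + w * w' * k) := by
  ext i j
  fin_cases i <;> fin_cases j <;>
    simp [atkinLehnerMatrix, Matrix.mul_apply, Fin.sum_univ_two] <;> ring

theorem mul_mem_atkinLehnerSet {k u v : ℕ} (hN : k * u * v ∣ N)
    (hg : g ∈ atkinLehnerSet N (k * u)) (hg' : g' ∈ atkinLehnerSet N (k * v)) :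
    g * g' ∈ atkinLehnerSet N (u * v) := by
  have hku := pos_of_mem_atkinLehnerSet hg
  have hkv := pos_of_mem_atkinLehnerSet hg'
  have huv := Nat.mul_pos (Nat.pos_of_mul_pos_left hku) (Nat.pos_of_mul_pos_left hkv)
  have hk : (k : ℝ) ≠ 0 := Nat.cast_ne_zero.2 (Nat.pos_of_mul_pos_right hku).ne'
  obtain ⟨x, y, z, w, hA⟩ := exists_smul_eq_atkinLehnerMatrix hg
  obtain ⟨x', y', z', w', hB⟩ := exists_smul_eq_atkinLehnerMatrix hg'
  obtain ⟨m, rfl⟩ := hN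
  have sqrt_mul_sqrt : √((k * u : ℕ) : ℝ) * √((k * v : ℕ) : ℝ) = k * √((u * v : ℕ) : ℝ) := by
    have hsq : ((k * u : ℕ) : ℝ) * ((k * v : ℕ) : ℝ) = (k : ℝ) ^ 2 * ((u * v : ℕ) : ℝ) := by
      push_cast
      ring
    rw [← Real.sqrt_mul (Nat.cast_nonneg _), hsq, Real.sqrt_mul (sq_nonneg _),
      Real.sqrt_sq k.cast_nonneg]
  refine (mem_atkinLehnerSet_iff huv).2 ⟨x * x' * k + y * z' * m,
    x * u * y' + y * w' * v, z * x' * v + w * u * z', z * y' * m + w * w' * k,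
    smul_right_injective _ hk ?_⟩
  calc (k : ℝ) • √((u * v : ℕ) : ℝ) • (g * g').1
      = (√((k * u : ℕ) : ℝ) • g.1) * (√((k * v : ℕ) : ℝ) • g'.1) := by
        rw [smul_mul_smul_comm, sqrt_mul_sqrt, mul_smul, Matrix.SpecialLinearGroup.coe_mul]
    _ = (atkinLehnerMatrix _ _ x y z w * atkinLehnerMatrix _ _ x' y' z' w').map (↑) := by
        rw [hA, hB]
        exact (Matrix.map_mul (f := Int.castRingHom ℝ)).symm
    _ = (k : ℝ) • (atkinLehnerMatrix _ (u * v) _ _ _ _).map ((↑) : ℤ → ℝ) := by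
        rw [atkinLehnerMatrix_mul]
        ext i j
        simp only [Matrix.map_apply, Matrix.smul_apply, smul_eq_mul, Int.cast_mul,
          Int.cast_natCast]

theorem inv_mem_atkinLehnerSet (hg : g ∈ atkinLehnerSet N e) : g⁻¹ ∈ atkinLehnerSet N e := by
  obtain ⟨x, y, z, w, hg⟩ := hg
  refine ⟨w, -y, -z, x, ?_⟩
  rw [Matrix.SpecialLinearGroup.coe_inv, Matrix.adjugate_fin_two, hg]
  ext i j
  fin_cases i <;> fin_cases j <;> simp

theorem mem_atkinLehnerSet_one_iff : g ∈ atkinLehnerSet N 1 ↔ g ∈ Gamma0SL2R N := by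
  constructor
  · intro hg
    obtain ⟨x, y, z, w, hA⟩ := exists_smul_eq_atkinLehnerMatrix hg
    have hdet : (atkinLehnerMatrix N 1 x y z w).det = 1 := det_eq_of_sqrt_smul_eq_map hA
    rw [Nat.cast_one, Real.sqrt_one, one_smul] at hA
    exact Subgroup.mem_map.2 ⟨⟨_, hdet⟩,
      CongruenceSubgroup.Gamma0_mem.2 (by simp [atkinLehnerMatrix]), Subtype.ext hA.symm⟩
  · intro hg
    obtain ⟨γ, hγ, rfl⟩ := Subgroup.mem_map.1 hg
    rw [CongruenceSubgroup.Gamma0_mem, ZMod.intCast_zmod_eq_zero_iff_dvd] at hγ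
    obtain ⟨z, hz⟩ := hγ
    refine ⟨γ 0 0, γ 0 1, z, γ 1 1, ?_⟩
    ext i j
    fin_cases i <;> fin_cases j <;> simp [hz, mul_comm]

theorem coprime_of_mem_atkinLehnerSet (hg : g ∈ atkinLehnerSet (e * k) e) : e.Coprime k := by
  obtain ⟨x, y, z, w, hA⟩ := exists_smul_eq_atkinLehnerMatrix hg
  exact Nat.isCoprime_iff_coprime.1 ⟨x * w, -(y * z), by
    linear_combination det_params_eq_one hA (pos_of_mem_atkinLehnerSet hg)⟩

theorem atkinLehnerSet_nonempty (he : 0 < e) (hc : e.Coprime k) :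
    (atkinLehnerSet (e * k) e).Nonempty := by
  obtain ⟨x, y, hxy⟩ := Nat.isCoprime_iff_coprime.2 hc
  have hs : √(e : ℝ) ≠ 0 := (Real.sqrt_pos.2 (Nat.cast_pos.2 he)).ne'
  have hdet : ((√(e : ℝ))⁻¹ • (atkinLehnerMatrix (e * k) e x (-y) 1 1).map ((↑) : ℤ → ℝ)).det
      = 1 := by
    have hdet : (atkinLehnerMatrix (e * k) e x (-y) 1 1).det = e := by
      rw [atkinLehnerMatrix, Matrix.det_fin_two_of, Nat.cast_mul]
      linear_combination (e : ℤ) * hxy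
    rw [Matrix.det_smul, ← Int.cast_det, hdet, Fintype.card_fin, inv_pow,
      Real.sq_sqrt e.cast_nonneg, Int.cast_natCast, inv_mul_cancel₀ (Nat.cast_ne_zero.2 he.ne')]
  exact ⟨⟨_, hdet⟩, (mem_atkinLehnerSet_iff he).2 ⟨_, _, _, _, smul_inv_smul₀ hs _⟩⟩

theorem eq_one_of_one_mem_atkinLehnerSet (h : 1 ∈ atkinLehnerSet N e) : e = 1 := by
  have he := pos_of_mem_atkinLehnerSet h
  obtain ⟨x, y, z, w, hA⟩ := exists_smul_eq_atkinLehnerMatrix h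
  have hy : y = 0 := by
    simpa [atkinLehnerMatrix, eq_comm] using congrFun (congrFun hA 0) 1
  have hdet := det_eq_of_sqrt_smul_eq_map hA
  rw [atkinLehnerMatrix, Matrix.det_fin_two_of, hy, zero_mul, sub_zero] at hdet
  have hunit : (e : ℤ) * (x * w) = 1 :=
    mul_left_cancel₀ (Nat.cast_ne_zero.2 he.ne' : (e : ℤ) ≠ 0) (by linear_combination hdet)
  exact_mod_cast Int.eq_one_of_dvd_one e.cast_nonneg ⟨_, hunit.symm⟩

theorem exists_eq_mul_mul_dvd {n e e' : ℕ} (he : e ∣ n) (he' : e' ∣ n) :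
    ∃ k u v : ℕ, e = k * u ∧ e' = k * v ∧ k * u * v ∣ n := by
  obtain ⟨u, v, huv, hu, hv⟩ := Nat.exists_coprime e e'
  generalize e.gcd e' = k at hu hv
  refine ⟨k, u, v, hu.trans (mul_comm u k), hv.trans (mul_comm v k), ?_⟩
  rw [mul_assoc, ← huv.lcm_eq_mul, ← Nat.lcm_mul_left, mul_comm k, mul_comm k, ← hu, ← hv]
  exact Nat.lcm_dvd he he'

theorem eq_of_mem_atkinLehnerSet {e' : ℕ} (he : e ∣ N) (he' : e' ∣ N)
    (hg : g ∈ atkinLehnerSet N e) (hg' : g ∈ atkinLehnerSet N e') : e = e' := by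
  obtain ⟨k, u, v, rfl, rfl, hd⟩ := exists_eq_mul_mul_dvd he he'
  have hone := mul_mem_atkinLehnerSet hd hg (inv_mem_atkinLehnerSet hg')
  rw [mul_inv_cancel] at hone
  have huv := eq_one_of_one_mem_atkinLehnerSet hone
  rw [Nat.eq_one_of_mul_eq_one_right huv, Nat.eq_one_of_mul_eq_one_left huv]

/-- The group of the Atkin–Lehner matrices `W_e` of level `N` with `e ∣ gcd(N, n)`. It interpolates
between `Γ₀(N)`, for `n = 1`, and `Γ₀*(N)`, for `n = N`. -/
def atkinLehnerGroup (N n : ℕ) : Subgroup SL2R where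
  carrier := {g | ∃ e, e ∣ N.gcd n ∧ g ∈ atkinLehnerSet N e}
  mul_mem' := by
    rintro g g' ⟨e, he, hg⟩ ⟨e', he', hg'⟩
    obtain ⟨k, u, v, rfl, rfl, hd⟩ := exists_eq_mul_mul_dvd he he'
    exact ⟨u * v, (Dvd.intro_left k (mul_assoc k u v).symm).trans hd,
      mul_mem_atkinLehnerSet (hd.trans (N.gcd_dvd_left n)) hg hg'⟩
  one_mem' := ⟨1, one_dvd _, mem_atkinLehnerSet_one_iff.2 (one_mem _)⟩
  inv_mem' := fun ⟨e, he, hg⟩ => ⟨e, he, inv_mem_atkinLehnerSet hg⟩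

theorem mem_atkinLehnerGroup_iff {n : ℕ} :
    g ∈ atkinLehnerGroup N n ↔ ∃ e, e ∣ N.gcd n ∧ g ∈ atkinLehnerSet N e :=
  Iff.rfl

theorem gamma0_le_atkinLehnerGroup (N n : ℕ) : Gamma0SL2R N ≤ atkinLehnerGroup N n :=
  fun _ hg => ⟨1, one_dvd _, mem_atkinLehnerSet_one_iff.2 hg⟩

theorem frickeGroup_eq_atkinLehnerGroup (N : ℕ) : FrickeGroup N = atkinLehnerGroup N N := by
  refine le_antisymm ((Subgroup.closure_le _).2 (Set.union_subset
    (gamma0_le_atkinLehnerGroup N N) (Set.iUnion₂_subset fun e he g hg => ?_))) ?_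
  · exact ⟨e, N.gcd_self.symm ▸ he.1, hg⟩
  · rintro g ⟨e, he, hg⟩
    obtain ⟨k, rfl⟩ := N.gcd_self ▸ he
    have hcoprime : e.Coprime (e * k / e) := by
      rw [Nat.mul_div_cancel_left k (pos_of_mem_atkinLehnerSet hg)]
      exact coprime_of_mem_atkinLehnerSet hg
    exact Subgroup.subset_closure
      (Or.inr (Set.mem_iUnion₂.2 ⟨e, ⟨dvd_mul_right e k, hcoprime⟩, hg⟩))

theorem mem_frickeGroup_iff : g ∈ FrickeGroup N ↔ ∃ e, e ∣ N ∧ g ∈ atkinLehnerSet N e := by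
  rw [frickeGroup_eq_atkinLehnerGroup, mem_atkinLehnerGroup_iff, N.gcd_self]

theorem atkinLehnerGroup_le_frickeGroup (N n : ℕ) : atkinLehnerGroup N n ≤ FrickeGroup N :=
  fun _ ⟨e, he, hg⟩ => mem_frickeGroup_iff.2 ⟨e, he.trans (N.gcd_dvd_left n), hg⟩

theorem neg_one_mem_gamma0 (N : ℕ) : -1 ∈ Gamma0SL2R N := by
  refine Subgroup.mem_map.2 ⟨-1, by simp [CongruenceSubgroup.Gamma0_mem], ?_⟩
  ext i j
  simp

theorem inv_mul_mem_gamma0_iff (he : e ∣ N) (hg : g ∈ atkinLehnerSet N e) :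
    g⁻¹ * g' ∈ Gamma0SL2R N ↔ g' ∈ atkinLehnerSet N e := by
  rw [← mem_atkinLehnerSet_one_iff]
  constructor
  · intro h
    have := mul_mem_atkinLehnerSet (k := 1) (u := e) (v := 1) (by simpa using he)
      (by rwa [one_mul]) h
    rwa [mul_inv_cancel_left, mul_one] at this
  · intro hg'
    simpa only [mul_one] using mul_mem_atkinLehnerSet (k := e) (u := 1) (v := 1)
      (by simpa using he) (by simpa using inv_mem_atkinLehnerSet hg) (by simpa using hg')

theorem card_divisors_eq_two_pow_of_squarefree {n : ℕ} (hn : Squarefree n) :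
    n.divisors.card = 2 ^ n.primeFactors.card := by
  rw [Nat.card_divisors hn.ne_zero, Finset.prod_congr rfl (g := fun _ => 2), Finset.prod_const]
  intro p hp
  rw [Nat.factorization_eq_one_of_squarefree hn (Nat.prime_of_mem_primeFactors hp)
    (Nat.dvd_of_mem_primeFactors hp)]

theorem relIndex_gamma0_atkinLehnerGroup (hN : Squarefree N) (n : ℕ) :
    (Gamma0SL2R N).relIndex (atkinLehnerGroup N n) = (N.gcd n).divisors.card := by
  have dvd_level (e : (N.gcd n).divisors) : e.1 ∣ N :=
    (Nat.dvd_of_mem_divisors e.2).trans (N.gcd_dvd_left n)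
  have exists_mem (e : (N.gcd n).divisors) : ∃ g, g ∈ atkinLehnerSet N e := by
    obtain ⟨k, hk⟩ := dvd_level e
    have he := Nat.pos_of_mem_divisors e.2
    have := atkinLehnerSet_nonempty he (Nat.coprime_of_squarefree_mul (hk ▸ hN))
    rwa [← hk] at this
  choose W hW using exists_mem
  let coset (e : (N.gcd n).divisors) :
      atkinLehnerGroup N n ⧸ (Gamma0SL2R N).subgroupOf (atkinLehnerGroup N n) :=
    QuotientGroup.mk ⟨W e, e, Nat.dvd_of_mem_divisors e.2, hW e⟩
  have coset_eq_iff (e) (γ : atkinLehnerGroup N n) :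
      coset e = QuotientGroup.mk γ ↔ γ.1 ∈ atkinLehnerSet N e :=
    QuotientGroup.eq.trans (inv_mul_mem_gamma0_iff (dvd_level e) (hW e))
  have coset_bijective : Function.Bijective coset := by
    constructor
    · intro e e' h
      exact Subtype.ext (eq_of_mem_atkinLehnerSet (dvd_level e) (dvd_level e')
        ((coset_eq_iff e _).1 h) (hW e'))
    · intro q
      obtain ⟨⟨γ, e, he, hγ⟩, rfl⟩ := QuotientGroup.mk_surjective q
      have hgcd : N.gcd n ≠ 0 := Nat.gcd_ne_zero_left hN.ne_zero
      exact ⟨⟨e, Nat.mem_divisors.2 ⟨he, hgcd⟩⟩, (coset_eq_iff _ _).2 hγ⟩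
  rw [Subgroup.relIndex, Subgroup.index, ← Nat.card_congr (Equiv.ofBijective _ coset_bijective),
    Nat.card_eq_fintype_card, Fintype.card_coe]

end AtkinLehner

section AtkinLehnerForms

variable {N e k : ℕ} {d h a b c : ℤ} {g : SL2R} {M : Matrix (Fin 2) (Fin 2) ℝ}

theorem formMat_inj {a' b' c' : ℤ} :
    formMat a b c = formMat a' b' c' ↔ a = a' ∧ b = b' ∧ c = c' := by
  constructor
  · intro h
    have h00 : (a : ℝ) = a' := congrFun (congrFun h 0) 0
    have h01 : (b : ℝ) / 2 = b' / 2 := congrFun (congrFun h 0) 1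
    have h11 : (c : ℝ) = c' := congrFun (congrFun h 1) 1
    exact ⟨by exact_mod_cast h00, by exact_mod_cast (div_left_inj' two_ne_zero).1 h01,
      by exact_mod_cast h11⟩
  · rintro ⟨rfl, rfl, rfl⟩
    rfl

theorem formMat_mem_QdN_iff :
    formMat a b c ∈ QdN d N ↔ 0 < a ∧ b ^ 2 - 4 * a * c = -d ∧ (N : ℤ) ∣ a := by
  constructor
  · rintro ⟨a', b', c', hM, h⟩
    obtain ⟨rfl, rfl, rfl⟩ := formMat_inj.1 hM
    exact h
  · exact fun h => ⟨a, b, c, rfl, h⟩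

theorem exists_formMat_eq (hM : M ∈ QdN d N) : ∃ a b c, M = formMat a b c :=
  let ⟨a, b, c, h, _⟩ := hM
  ⟨a, b, c, h⟩

theorem QdNh_subset_QdN (d : ℤ) (N : ℕ) (h : ℤ) : QdNh d N h ⊆ QdN d N := by
  rintro M ⟨a, b, c, hM, ha, hdisc, hNa, -⟩
  exact ⟨a, b, c, hM, ha, hdisc, hNa⟩

theorem formMat_mem_QdNh_iff :
    formMat a b c ∈ QdNh d N h ↔ formMat a b c ∈ QdN d N ∧ ((2 * N : ℕ) : ℤ) ∣ h - b := by
  rw [← ZMod.intCast_eq_intCast_iff_dvd_sub]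
  constructor
  · intro hM
    refine ⟨QdNh_subset_QdN d N h hM, ?_⟩
    obtain ⟨a', b', c', hM, -, -, -, hb⟩ := hM
    obtain ⟨rfl, rfl, rfl⟩ := formMat_inj.1 hM
    exact hb
  · rintro ⟨hM, hb⟩
    obtain ⟨ha, hdisc, hNa⟩ := formMat_mem_QdN_iff.1 hM
    exact ⟨a, b, c, rfl, ha, hdisc, hNa, hb⟩

theorem posDef_of_mem_QdN (hd : 0 < d) (hM : M ∈ QdN d N) : M.PosDef := by
  obtain ⟨a, b, c, rfl, ha, hdisc, -⟩ := hM
  exact posDef_formMat ha (hdisc ▸ neg_neg_of_pos hd)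

theorem natCast_smul_inv_smul_form {A : Matrix (Fin 2) (Fin 2) ℝ} (hA : √(e : ℝ) • g.1 = A)
    (M : Matrix (Fin 2) (Fin 2) ℝ) : (e : ℝ) • (g⁻¹ • M) = Aᵀ * M * A := by
  rw [← hA, inv_smul_form, Matrix.transpose_smul, Matrix.smul_mul, Matrix.smul_mul,
    Matrix.mul_smul, smul_smul, Real.mul_self_sqrt e.cast_nonneg]

theorem atkinLehnerMatrix_transpose_mul_formMat_mul (e k : ℕ) (x y z w a b c : ℤ) :
    ((atkinLehnerMatrix (e * k) e x y z w).map ((↑) : ℤ → ℝ))ᵀ * formMat (e * k * a) b c *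
        (atkinLehnerMatrix (e * k) e x y z w).map ((↑) : ℤ → ℝ) =
      (e : ℝ) • formMat (e * k * (a * x ^ 2 * e + b * x * z + c * z ^ 2 * k))
        (2 * (e * k * a) * x * y + b * (x * w * e + y * z * k) + 2 * c * z * w * e * k)
        (a * k * y ^ 2 + b * y * w + c * w ^ 2 * e) := by
  rw [atkinLehnerMatrix_map]
  ext i j
  fin_cases i <;> fin_cases j <;>
    simp [formMat, Matrix.mul_apply, Fin.sum_univ_two] <;> ring

theorem exists_inv_smul_formMat_eq (hg : g ∈ atkinLehnerSet (e * k) e)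
    (ha : ((e * k : ℕ) : ℤ) ∣ a) (b c : ℤ) :
    ∃ a' b' c' : ℤ, g⁻¹ • formMat a b c = formMat a' b' c' ∧ ((e * k : ℕ) : ℤ) ∣ a' ∧
      b' ^ 2 - 4 * a' * c' = b ^ 2 - 4 * a * c ∧ 2 * (k : ℤ) ∣ b' - b ∧ 2 * (e : ℤ) ∣ b' + b := by
  have he := pos_of_mem_atkinLehnerSet hg
  obtain ⟨x, y, z, w, hA⟩ := exists_smul_eq_atkinLehnerMatrix hg
  have hdet := det_params_eq_one hA he
  obtain ⟨a, rfl⟩ := ha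
  rw [Nat.cast_mul]
  refine ⟨_, _, _, smul_right_injective _ (Nat.cast_ne_zero.2 he.ne' : (e : ℝ) ≠ 0)
    ((natCast_smul_inv_smul_form hA _).trans
      (atkinLehnerMatrix_transpose_mul_formMat_mul e k x y z w a b c)),
    dvd_mul_right _ _, ?_, ?_, ?_⟩
  · linear_combination (b ^ 2 - 4 * (e * k * a) * c) * (x * w * e - y * z * k + 1) * hdet
  · exact ⟨e * a * x * y + b * y * z + c * z * w * e, by linear_combination b * hdet⟩
  · exact ⟨k * a * x * y + b * x * w + c * z * w * k, by linear_combination -b * hdet⟩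

theorem exists_smul_formMat_eq (hd : 0 < d) (hg : g ∈ atkinLehnerSet (e * k) e)
    (hM : formMat a b c ∈ QdN d (e * k)) :
    ∃ a' b' c' : ℤ, g • formMat a b c = formMat a' b' c' ∧ formMat a' b' c' ∈ QdN d (e * k) ∧
      2 * (k : ℤ) ∣ b' - b ∧ 2 * (e : ℤ) ∣ b' + b := by
  have hpos : 0 < (g • formMat a b c) 0 0 := (posDef_smul (posDef_of_mem_QdN hd hM) g).diag_pos
  obtain ⟨-, hdisc, ha⟩ := formMat_mem_QdN_iff.1 hM
  obtain ⟨a', b', c', heq, ha', hdisc', hk, he⟩ :=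
    exists_inv_smul_formMat_eq (inv_mem_atkinLehnerSet hg) ha b c
  rw [inv_inv] at heq
  have ha'_pos : (0 : ℝ) < a' := by
    rw [heq] at hpos
    exact hpos
  exact ⟨a', b', c', heq,
    formMat_mem_QdN_iff.2 ⟨by exact_mod_cast ha'_pos, hdisc'.trans hdisc, ha'⟩, hk, he⟩

theorem two_mul_mul_dvd_iff (hc : e.Coprime k) {t : ℤ} :
    ((2 * (e * k) : ℕ) : ℤ) ∣ t ↔ 2 * (k : ℤ) ∣ t ∧ 2 * (e : ℤ) ∣ t := by
  push_cast
  refine ⟨fun h => ⟨(mul_dvd_mul_left 2 (dvd_mul_left _ _)).trans h,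
    (mul_dvd_mul_left 2 (dvd_mul_right _ _)).trans h⟩, ?_⟩
  rintro ⟨⟨u, rfl⟩, he⟩
  rw [mul_assoc, mul_dvd_mul_iff_left two_ne_zero] at he ⊢
  exact (Nat.isCoprime_iff_coprime.2 hc).mul_dvd he (dvd_mul_right _ _)

theorem smul_mem_QdNh_iff (hN : Squarefree N) (hd : 0 < d) (he : e ∣ N)
    (hg : g ∈ atkinLehnerSet N e) (hM : M ∈ QdNh d N h) :
    g • M ∈ QdNh d N h ↔ (e : ℤ) ∣ d := by
  obtain ⟨k, rfl⟩ := he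
  obtain ⟨a, b, c, rfl⟩ := exists_formMat_eq (QdNh_subset_QdN _ _ _ hM)
  obtain ⟨hM, hb⟩ := formMat_mem_QdNh_iff.1 hM
  obtain ⟨a', b', c', heq, hmem, hk', he'⟩ := exists_smul_formMat_eq hd hg hM
  obtain ⟨-, hdisc, ha⟩ := formMat_mem_QdN_iff.1 hM
  have he_sq : Squarefree (e : ℤ) := Int.squarefree_natCast.2 (hN.of_mul_left)
  have he_ac : (e : ℤ) ∣ 4 * a * c :=
    (((Nat.cast_dvd_cast (dvd_mul_right e k)).trans ha).mul_left 4).mul_right c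
  calc g • formMat a b c ∈ QdNh d (e * k) h
    _ ↔ ((2 * (e * k) : ℕ) : ℤ) ∣ h - b' := by rw [heq, formMat_mem_QdNh_iff, and_iff_right hmem]
    _ ↔ ((2 * (e * k) : ℕ) : ℤ) ∣ b' - b := by
      rw [← dvd_sub_right hb, sub_sub_sub_cancel_left]
    _ ↔ 2 * (e : ℤ) ∣ b' - b := by
      rw [two_mul_mul_dvd_iff (coprime_of_mem_atkinLehnerSet hg), and_iff_right hk']
    _ ↔ 2 * (e : ℤ) ∣ 2 * b := by
      rw [← dvd_sub_right he']
      ring_nf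
    _ ↔ (e : ℤ) ∣ b ^ 2 := by
      rw [mul_dvd_mul_iff_left two_ne_zero, he_sq.dvd_pow_iff_dvd two_ne_zero]
    _ ↔ (e : ℤ) ∣ d := by
      rw [← dvd_sub_left he_ac, hdisc, dvd_neg]

theorem smul_mem_QdNh_iff_mem_atkinLehnerGroup (hN : Squarefree N) (hd : 0 < d)
    (hg : g ∈ FrickeGroup N) (hM : M ∈ QdNh d N h) :
    g • M ∈ QdNh d N h ↔ g ∈ atkinLehnerGroup N d.toNat := by
  have dvd_toNat_iff (e : ℕ) : e ∣ d.toNat ↔ (e : ℤ) ∣ d := by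
    rw [← Int.natCast_dvd_natCast, Int.toNat_of_nonneg hd.le]
  constructor
  · intro hgM
    obtain ⟨e, he, hg⟩ := mem_frickeGroup_iff.1 hg
    exact ⟨e, Nat.dvd_gcd he ((dvd_toNat_iff e).2 ((smul_mem_QdNh_iff hN hd he hg hM).1 hgM)), hg⟩
  · rintro ⟨e, he, hg⟩
    obtain ⟨heN, hed⟩ := Nat.dvd_gcd_iff.1 he
    exact (smul_mem_QdNh_iff hN hd heN hg hM).2 ((dvd_toNat_iff e).1 hed)

theorem exists_eq_mul_and_two_mul_dvd_sub_add (hdvd : (4 * N : ℤ) ∣ h ^ 2 - b ^ 2) :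
    ∃ e k : ℕ, N = e * k ∧ 2 * (k : ℤ) ∣ h - b ∧ 2 * (e : ℤ) ∣ h + b := by
  have heven : 2 ∣ h - b := by
    have h2 : (2 : ℤ) ∣ h ^ 2 - b ^ 2 :=
      (Dvd.intro (2 * N : ℤ) (by ring)).trans hdvd
    simpa [← even_iff_two_dvd, Int.even_sub, Int.even_pow] using h2
  obtain ⟨u, hu⟩ := heven
  have hN : (N : ℤ) ∣ u * (u + b) := by
    have hsq : h ^ 2 - b ^ 2 = 4 * (u * (u + b)) := by linear_combination (h + b + 2 * u) * hu
    exact (mul_dvd_mul_iff_left four_ne_zero).1 (hsq ▸ hdvd)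
  obtain ⟨k, e, hk, he, hke⟩ := exists_dvd_and_dvd_of_dvd_mul hN
  refine ⟨e.natAbs, k.natAbs, ?_, ?_, ?_⟩
  · rw [← Int.natAbs_mul, mul_comm, ← hke, Int.natAbs_natCast]
  · rw [hu, mul_dvd_mul_iff_left two_ne_zero, Int.natAbs_dvd]
    exact hk
  · have hsum : h + b = 2 * (u + b) := by linear_combination hu
    rw [hsum, mul_dvd_mul_iff_left two_ne_zero, Int.natAbs_dvd]
    exact he

theorem exists_smul_mem_QdNh (hN : Squarefree N) (hd : 0 < d) (hh : (4 * N : ℤ) ∣ h ^ 2 + d)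
    (hM : M ∈ QdN d N) : ∃ g ∈ FrickeGroup N, g • M ∈ QdNh d N h := by
  obtain ⟨a, b, c, rfl⟩ := exists_formMat_eq hM
  obtain ⟨-, hdisc, ha⟩ := formMat_mem_QdN_iff.1 hM
  have hdvd : (4 * N : ℤ) ∣ h ^ 2 - b ^ 2 := by
    have h4 : (4 * N : ℤ) ∣ 4 * a * c := (mul_dvd_mul_left 4 ha).mul_right c
    have hsq : h ^ 2 - b ^ 2 = h ^ 2 + d - 4 * a * c := by linear_combination -hdisc
    exact hsq ▸ dvd_sub hh h4
  obtain ⟨e, k, rfl, hk, he⟩ := exists_eq_mul_and_two_mul_dvd_sub_add hdvd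
  have hc : e.Coprime k := Nat.coprime_of_squarefree_mul hN
  obtain ⟨g, hg⟩ := atkinLehnerSet_nonempty (Nat.pos_of_ne_zero hN.of_mul_left.ne_zero) hc
  obtain ⟨a', b', c', heq, hmem, hk', he'⟩ := exists_smul_formMat_eq hd hg hM
  refine ⟨g, mem_frickeGroup_iff.2 ⟨e, dvd_mul_right e k, hg⟩, heq ▸ formMat_mem_QdNh_iff.2
    ⟨hmem, (two_mul_mul_dvd_iff hc).2 ⟨?_, ?_⟩⟩⟩
  · simpa only [sub_sub_sub_cancel_right] using dvd_sub hk hk'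
  · simpa only [add_sub_add_right_eq_sub] using dvd_sub he he'

end AtkinLehnerForms

theorem four_mul_dvd_sq_add_of_sq_eq {N : ℕ} {d h : ℤ}
    (hh : (h : ZMod (4 * N)) ^ 2 = ((-d : ℤ) : ZMod (4 * N))) : (4 * N : ℤ) ∣ h ^ 2 + d := by
  rw [← Int.cast_pow, eq_comm, ZMod.intCast_eq_intCast_iff_dvd_sub, sub_neg_eq_add] at hh
  exact_mod_cast hh

theorem trace_gamma0_eq_pow_two_mul_trace_fricke_general {N : ℕ} (hN : Squarefree N) {f : ℂ → ℂ}
    (hf : ∀ g ∈ FrickeGroup N, ∀ z : ℂ, 0 < z.im → f (moebius g z) = f z) {d : ℤ} (hd : 0 < d)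
    {h : ℤ} (hh : (h : ZMod (4 * N)) ^ 2 = ((-d : ℤ) : ZMod (4 * N))) :
    classTrace (Gamma0SL2R N) f (QdNh d N h) =
      2 ^ ((Nat.gcd N d.toNat).primeFactors.card) * classTrace (FrickeGroup N) f (QdN d N) := by
  let H := atkinLehnerGroup N d.toNat
  have hHΓ : H ≤ FrickeGroup N := atkinLehnerGroup_le_frickeGroup N d.toNat
  have smul_mem_iff {g} (hg : g ∈ FrickeGroup N) {M} (hM : M ∈ QdNh d N h) :
      g • M ∈ QdNh d N h ↔ g ∈ H :=
    smul_mem_QdNh_iff_mem_atkinLehnerGroup hN hd hg hM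
  have index_eq : (Gamma0SL2R N).relIndex H = 2 ^ (N.gcd d.toNat).primeFactors.card :=
    (relIndex_gamma0_atkinLehnerGroup hN _).trans
      (card_divisors_eq_two_pow_of_squarefree (hN.squarefree_of_dvd (N.gcd_dvd_left _)))
  have hF : ∀ g ∈ FrickeGroup N, ∀ M ∈ QdN d N, (f ∘ cmPointC) (g • M) = (f ∘ cmPointC) M := by
    intro g hg M hM
    have hpos := posDef_of_mem_QdN hd hM
    exact (congrArg f (cmPointC_smul hpos g)).trans (hf g hg _ (cmPointC_im_pos hpos))
  have hsub : QdNh d N h ⊆ QdN d N := QdNh_subset_QdN d N h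
  have hneg := neg_one_mem_gamma0 N
  calc classTrace (Gamma0SL2R N) f (QdNh d N h)
    _ = 2 * orbitTrace (Gamma0SL2R N) (f ∘ cmPointC) (QdNh d N h) :=
      classTrace_eq_two_mul_orbitTrace hneg f _
    _ = 2 * (2 ^ (N.gcd d.toNat).primeFactors.card *
          orbitTrace H (f ∘ cmPointC) (QdNh d N h)) := by
      rw [orbitTrace_eq_relIndex_mul_orbitTrace (gamma0_le_atkinLehnerGroup N d.toNat)
        (index_eq ▸ pow_ne_zero _ two_ne_zero)
        (fun g hg M hM => (smul_mem_iff (hHΓ hg) hM).2 hg)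
        (fun g hg M hM => hF g (hHΓ hg) M (hsub hM)), index_eq, Nat.cast_pow, Nat.cast_ofNat]
    _ = 2 * (2 ^ (N.gcd d.toNat).primeFactors.card *
          orbitTrace (FrickeGroup N) (f ∘ cmPointC) (QdN d N)) := by
      rw [orbitTrace_eq_of_meets_orbits hHΓ hsub
        (fun g hg M hM => (smul_mem_iff hg hM).1)
        (fun M => exists_smul_mem_QdNh hN hd (four_mul_dvd_sq_add_of_sq_eq hh)) hF]
    _ = 2 ^ (N.gcd d.toNat).primeFactors.card * classTrace (FrickeGroup N) f (QdN d N) := by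
      rw [classTrace_eq_two_mul_orbitTrace
        ((gamma0_le_atkinLehnerGroup N d.toNat).trans hHΓ hneg), mul_left_comm]

/-- **Lemma 4.2.** For `N ∈ {2,3,5,6,7,10,13}` and a weakly holomorphic modular function `f`
on `Γ₀*(N)`: for every `d > 0` and every `h` with `h² ≡ -d (mod 4N)`,
`t_f^{(h)}(d) = 2^{μ_N(d)} t_f^*(d)`; in particular `t_f^{(h)}(d)` does not depend on `h`. -/
theorem trace_gamma0_eq_pow_two_mul_trace_fricke (N : ℕ)
    (hN : N ∈ ({2, 3, 5, 6, 7, 10, 13} : Set ℕ))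
    (f : ℂ → ℂ) (hf : IsWeaklyHolModularFn (FrickeGroup N) f)
    (d : ℤ) (hd : 0 < d) (h : ℤ)
    (hh : (h : ZMod (4 * N)) ^ 2 = ((-d : ℤ) : ZMod (4 * N))) :
    classTrace (Gamma0SL2R N) f (QdNh d N h) =
      2 ^ ((Nat.gcd N d.toNat).primeFactors.card) * classTrace (FrickeGroup N) f (QdN d N) := by
  have hsq : Squarefree N := by
    rcases hN with rfl | rfl | rfl | rfl | rfl | rfl | rfl <;> decide +kernel
  exact trace_gamma0_eq_pow_two_mul_trace_fricke_general hsq hf.2.1 hd hh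
end
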